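/- arXiv:2408.17109 — 2 statements merged into one kernel-verified Lean document; each statement's English description precedes it below -/
import Mathlib

section
/- Let f: D([0,T]; ℝ^d) → ℝ be pathwise Malliavin differentiable with derivative 𝔻f; assume that f and, for every t ∈ [0,T], the map ω ↦ 𝔻_t f(ω) are continuous with respect to the uniform norm, and that 𝔻f has left limits and is boundedness preserving. Then for every ω ∈ D([0,T]; ℝ^d) and every absolutely continuous path η with η_0 = 0, say η_t = ∫_0^t g_s ds with g ∈ L^1([0,T]; ℝ^d), the map t ↦ ⟨𝔻_t f(ω), g_t⟩ is Lebesgue integrable and lim_{ε→0} (f(ω + ε η) − f(ω))/ε = ∫_0^T ⟨𝔻_t f(ω), g_t⟩ dt. -/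
open MeasureTheory Filter Set

noncomputable section

/-- `ω : ℝ → ℝ^d` is càdlàg on `[0,T]`: right-continuous at every `t ∈ [0,T)` (within `[0,T]`)
and with left limits (within `[0,T]`) at every `t ∈ (0,T]`. -/
def CadlagOn (T : ℝ) {d : ℕ} (ω : ℝ → Fin d → ℝ) : Prop :=
  (∀ t ∈ Set.Ico (0 : ℝ) T, Tendsto ω (nhdsWithin t (Set.Ioc t T)) (nhds (ω t))) ∧
  (∀ t ∈ Set.Ioc (0 : ℝ) T, ∃ l : Fin d → ℝ, Tendsto ω (nhdsWithin t (Set.Ico 0 t)) (nhds l))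

/-- The bump path `e·1_{[t,T]}`. -/
def bump (T : ℝ) {d : ℕ} (t : ℝ) (e : Fin d → ℝ) : ℝ → Fin d → ℝ :=
  Set.indicator (Set.Icc t T) (fun _ => e)

/-- `f` is pathwise Malliavin differentiable on `D([0,T]; ℝ^d)` with derivative `Df`:
for every càdlàg `ω`, every `t ∈ [0,T]` and every `e ∈ ℝ^d`,
`(f(ω + ε e 1_{[t,T]}) − f(ω))/ε → ⟨Df ω t, e⟩` as `ε → 0`. -/
def HasPathwiseMalliavinDeriv (T : ℝ) {d : ℕ} (f : (ℝ → Fin d → ℝ) → ℝ)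
    (Df : (ℝ → Fin d → ℝ) → ℝ → Fin d → ℝ) : Prop :=
  ∀ ω : ℝ → Fin d → ℝ, CadlagOn T ω → ∀ t ∈ Set.Icc (0 : ℝ) T, ∀ e : Fin d → ℝ,
    Tendsto (fun ε : ℝ => (f (ω + ε • bump T t e) - f ω) / ε)
      (nhdsWithin 0 {(0 : ℝ)}ᶜ) (nhds (∑ i, Df ω t i * e i))

/-- Continuity of a real functional on càdlàg paths with respect to the uniform norm on `[0,T]`
(sequential formulation). -/
def UnifContOnCadlag (T : ℝ) {d : ℕ} (f : (ℝ → Fin d → ℝ) → ℝ) : Prop :=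
  ∀ (ω : ℝ → Fin d → ℝ) (ωs : ℕ → ℝ → Fin d → ℝ),
    CadlagOn T ω → (∀ n, CadlagOn T (ωs n)) →
    TendstoUniformlyOn ωs ω atTop (Set.Icc 0 T) →
    Tendsto (fun n => f (ωs n)) atTop (nhds (f ω))

/-- Continuity of an `ℝ^d`-valued functional on càdlàg paths with respect to the uniform norm
on `[0,T]` (sequential formulation). -/
def UnifContOnCadlagVec (T : ℝ) {d : ℕ} (F : (ℝ → Fin d → ℝ) → Fin d → ℝ) : Prop :=
  ∀ (ω : ℝ → Fin d → ℝ) (ωs : ℕ → ℝ → Fin d → ℝ),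
    CadlagOn T ω → (∀ n, CadlagOn T (ωs n)) →
    TendstoUniformlyOn ωs ω atTop (Set.Icc 0 T) →
    Tendsto (fun n => F (ωs n)) atTop (nhds (F ω))

/-- `F : [0,T] × D([0,T];ℝ^d) → ℝ^d` has left limits: whenever `ω^n → ω` uniformly on `[0,T]`
and `t^n ↑ t` with `t^n < t`, `F(t^n, ω^n)` converges to a limit depending only on `(t, ω)`. -/
def HasLeftLimits (T : ℝ) {d : ℕ} (F : (ℝ → Fin d → ℝ) → ℝ → Fin d → ℝ) : Prop :=
  ∀ ω : ℝ → Fin d → ℝ, CadlagOn T ω → ∀ t ∈ Set.Ioc (0 : ℝ) T, ∃ l : Fin d → ℝ,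
    ∀ (ωs : ℕ → ℝ → Fin d → ℝ) (ts : ℕ → ℝ),
      (∀ n, CadlagOn T (ωs n)) →
      TendstoUniformlyOn ωs ω atTop (Set.Icc 0 T) →
      (∀ n, ts n < t) → Monotone ts → Tendsto ts atTop (nhds t) →
      Tendsto (fun n => F (ωs n) (ts n)) atTop (nhds l)

/-- `F` is boundedness preserving: `sup_{t ∈ [0,T]} sup_{‖ω‖_∞ < K} |F(t, ω)| < ∞` for every
`K > 0`. -/
def BoundednessPreserving (T : ℝ) {d : ℕ} (F : (ℝ → Fin d → ℝ) → ℝ → Fin d → ℝ) : Prop :=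
  ∀ K : ℝ, 0 < K → ∃ M : ℝ,
    ∀ ω : ℝ → Fin d → ℝ, CadlagOn T ω → (∀ s ∈ Set.Icc (0 : ℝ) T, ‖ω s‖ < K) →
      ∀ t ∈ Set.Icc (0 : ℝ) T, ‖F ω t‖ ≤ M

end

section Auxiliary

open Topology

variable {T : ℝ} {d : ℕ}

lemma CadlagOn.add {ω η : ℝ → Fin d → ℝ} (hω : CadlagOn T ω) (hη : CadlagOn T η) :
    CadlagOn T (ω + η) := by
  refine ⟨fun t ht => (hω.1 t ht).add (hη.1 t ht), fun t ht => ?_⟩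
  obtain ⟨l, hl⟩ := hω.2 t ht
  obtain ⟨m, hm⟩ := hη.2 t ht
  exact ⟨l + m, hl.add hm⟩

lemma CadlagOn.const_smul {ω : ℝ → Fin d → ℝ} (hω : CadlagOn T ω) (c : ℝ) :
    CadlagOn T (c • ω) := by
  refine ⟨fun t ht => (hω.1 t ht).const_smul c, fun t ht => ?_⟩
  obtain ⟨l, hl⟩ := hω.2 t ht
  exact ⟨c • l, hl.const_smul c⟩

lemma ContinuousOn.cadlagOn {η : ℝ → Fin d → ℝ} (hη : ContinuousOn η (Icc 0 T)) :
    CadlagOn T η := by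
  refine ⟨fun t ht => (hη t ⟨ht.1, ht.2.le⟩).tendsto.mono_left
      (nhdsWithin_mono _ fun s hs => ⟨ht.1.trans hs.1.le, hs.2⟩),
    fun t ht => ⟨η t, (hη t ⟨ht.1.le, ht.2⟩).tendsto.mono_left
      (nhdsWithin_mono _ fun s hs => ⟨hs.1, hs.2.le.trans ht.2⟩)⟩⟩

lemma bump_of_mem {t s : ℝ} (h : s ∈ Icc t T) (e : Fin d → ℝ) : bump T t e s = e :=
  indicator_of_mem h _

lemma bump_of_lt {t s : ℝ} (h : s < t) (e : Fin d → ℝ) : bump T t e s = 0 :=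
  indicator_of_notMem (fun h' => h.not_ge h'.1) _

lemma cadlagOn_bump (t : ℝ) (e : Fin d → ℝ) : CadlagOn T (bump T t e) := by
  constructor
  · intro s hs
    rcases le_or_gt t s with h | h
    · rw [bump_of_mem ⟨h, hs.2.le⟩]
      refine tendsto_const_nhds.congr' ?_
      filter_upwards [self_mem_nhdsWithin] with x hx
      exact (bump_of_mem ⟨h.trans hx.1.le, hx.2⟩ e).symm
    · rw [bump_of_lt h]
      refine tendsto_const_nhds.congr' ?_
      filter_upwards [mem_nhdsWithin_of_mem_nhds (Iio_mem_nhds h)] with x hx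
      exact (bump_of_lt hx e).symm
  · intro s hs
    rcases lt_or_ge t s with h | h
    · refine ⟨e, tendsto_const_nhds.congr' ?_⟩
      filter_upwards [mem_nhdsWithin_of_mem_nhds (Ioi_mem_nhds h), self_mem_nhdsWithin] with x hx hx'
      exact (bump_of_mem ⟨le_of_lt hx, hx'.2.le.trans hs.2⟩ e).symm
    · refine ⟨0, tendsto_const_nhds.congr' ?_⟩
      filter_upwards [self_mem_nhdsWithin] with x hx
      exact (bump_of_lt (hx.2.trans_le h) e).symm

lemma bump_smul (t c : ℝ) (e : Fin d → ℝ) : bump T t (c • e) = c • bump T t e := by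
  ext s i
  by_cases h : s ∈ Icc t T <;> simp [bump, h]

lemma norm_bump_le (t : ℝ) (e : Fin d → ℝ) (s : ℝ) : ‖bump T t e s‖ ≤ ‖e‖ :=
  norm_indicator_le_norm_self _ _

lemma CadlagOn.exists_norm_le {ω : ℝ → Fin d → ℝ} (hω : CadlagOn T ω) :
    ∃ C, ∀ s ∈ Icc 0 T, ‖ω s‖ ≤ C := by
  refine isCompact_Icc.induction_on (p := fun A => ∃ C, ∀ s ∈ A, ‖ω s‖ ≤ C) ⟨0, by simp⟩
    (fun A B hAB ⟨C, hC⟩ => ⟨C, fun s hs => hC s (hAB hs)⟩)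
    (fun A B ⟨C, hC⟩ ⟨C', hC'⟩ => ⟨max C C', fun s hs => hs.elim
      (fun h => (hC s h).trans (le_max_left _ _)) fun h => (hC' s h).trans (le_max_right _ _)⟩) ?_
  intro t ht
  have hleft : ∃ C, ∀ᶠ s in 𝓝[Ico 0 t] t, ‖ω s‖ ≤ C := by
    rcases ht.1.eq_or_lt with rfl | h
    · exact ⟨0, by simp⟩
    · obtain ⟨l, hl⟩ := hω.2 t ⟨h, ht.2⟩
      exact ⟨‖l‖ + 1, (hl.norm.eventually_lt_const (lt_add_one _)).mono fun s => le_of_lt⟩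
  have hright : ∃ C, ∀ᶠ s in 𝓝[Ioc t T] t, ‖ω s‖ ≤ C := by
    rcases ht.2.eq_or_lt with rfl | h
    · exact ⟨0, by simp⟩
    · exact ⟨‖ω t‖ + 1,
        ((hω.1 t ⟨ht.1, h⟩).norm.eventually_lt_const (lt_add_one _)).mono fun s => le_of_lt⟩
  obtain ⟨C, hC⟩ := hleft
  obtain ⟨C', hC'⟩ := hright
  refine ⟨{s | ‖ω s‖ ≤ max (max C C') ‖ω t‖}, ?_, max (max C C') ‖ω t‖, fun s hs => hs⟩
  have hsub : Icc 0 T ⊆ (Ico 0 t ∪ Ioc t T) ∪ {t} := by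
    intro s hs
    rcases lt_trichotomy s t with h | h | h
    · exact Or.inl (Or.inl ⟨hs.1, h⟩)
    · exact Or.inr h
    · exact Or.inl (Or.inr ⟨h, hs.2⟩)
  refine nhdsWithin_mono _ hsub ?_
  rw [nhdsWithin_union, nhdsWithin_union, nhdsWithin_singleton]
  refine ⟨⟨?_, ?_⟩, ?_⟩
  · exact hC.mono fun s (hs : ‖ω s‖ ≤ C) => hs.trans ((le_max_left C C').trans (le_max_left _ _))
  · exact hC'.mono fun s (hs : ‖ω s‖ ≤ C') => hs.trans ((le_max_right C C').trans (le_max_left _ _))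
  · exact le_max_right (max C C') ‖ω t‖

/-- The mean value theorem along a single jump direction. -/
lemma HasPathwiseMalliavinDeriv.exists_sub_eq {f : (ℝ → Fin d → ℝ) → ℝ}
    {Df : (ℝ → Fin d → ℝ) → ℝ → Fin d → ℝ} (h : HasPathwiseMalliavinDeriv T f Df)
    {ω : ℝ → Fin d → ℝ} (hω : CadlagOn T ω) {t : ℝ} (ht : t ∈ Icc 0 T) (e : Fin d → ℝ) :
    ∃ θ ∈ Ioo (0 : ℝ) 1,
      f (ω + bump T t e) - f ω = ∑ i, Df (ω + θ • bump T t e) t i * e i := by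
  have hder : ∀ x : ℝ, HasDerivAt (fun x : ℝ => f (ω + x • bump T t e))
      (∑ i, Df (ω + x • bump T t e) t i * e i) x := by
    intro x
    rw [hasDerivAt_iff_tendsto_slope_zero]
    refine (h _ (hω.add ((cadlagOn_bump t e).const_smul x)) t ht e).congr fun ε => ?_
    rw [add_smul, ← add_assoc, smul_eq_mul, div_eq_inv_mul]
  obtain ⟨θ, hθ, h1⟩ := exists_hasDerivAt_eq_slope _ _ (zero_lt_one' ℝ)
    (fun x _ => (hder x).continuousAt.continuousWithinAt) fun x _ => hder x
  refine ⟨θ, hθ, ?_⟩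
  simpa using h1.symm

/-- Increments of `f` along a path with finitely many jumps, expressed through `Df` at
intermediate paths. -/
lemma HasPathwiseMalliavinDeriv.exists_sum_eq {f : (ℝ → Fin d → ℝ) → ℝ}
    {Df : (ℝ → Fin d → ℝ) → ℝ → Fin d → ℝ} (h : HasPathwiseMalliavinDeriv T f Df)
    {ω : ℝ → Fin d → ℝ} (hω : CadlagOn T ω) (ε : ℝ) (τ : ℕ → ℝ) (a : ℕ → Fin d → ℝ) (N : ℕ)
    (hτ : ∀ k < N, τ k ∈ Icc 0 T) :
    ∃ ρ : ℕ → ℝ → Fin d → ℝ, (∀ k, CadlagOn T (ρ k)) ∧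
      (∀ k s, ‖ρ k s - ω s‖ ≤ |ε| * ∑ j ∈ Finset.range N, ‖a j‖) ∧
      f (ω + ε • ∑ j ∈ Finset.range N, bump T (τ j) (a j)) - f ω
        = ε * ∑ k ∈ Finset.range N, ∑ i, Df (ρ k) (τ k) i * a k i := by
  let S : ℕ → ℝ → Fin d → ℝ := fun k => ∑ j ∈ Finset.range k, bump T (τ j) (a j)
  have hSsucc : ∀ k, ω + ε • S (k + 1) = ω + ε • S k + bump T (τ k) (ε • a k) := fun k => by
    simp only [S, Finset.sum_range_succ, smul_add, bump_smul, add_assoc]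
  have hcad : ∀ k, CadlagOn T (ω + ε • S k) := by
    intro k
    induction k with
    | zero => simpa [S] using hω
    | succ k ih =>
      rw [hSsucc]
      exact ih.add (cadlagOn_bump _ _)
  have hkey : ∀ k, ∃ θ ∈ Ioo (0 : ℝ) 1, k < N →
      f (ω + ε • S (k + 1)) - f (ω + ε • S k)
        = ∑ i, Df (ω + ε • S k + θ • bump T (τ k) (ε • a k)) (τ k) i * (ε • a k) i := by
    intro k
    by_cases hk : k < N
    · obtain ⟨θ, hθ, h1⟩ := h.exists_sub_eq (hcad k) (hτ k hk) (ε • a k)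
      exact ⟨θ, hθ, fun _ => by rw [hSsucc, h1]⟩
    · exact ⟨1 / 2, by norm_num, fun h' => absurd h' hk⟩
  choose θ hθ hθ' using hkey
  refine ⟨fun k => if k < N then ω + ε • S k + θ k • bump T (τ k) (ε • a k) else ω,
    fun k => ?_, fun k s => ?_, ?_⟩
  · dsimp only
    split_ifs
    · exact (hcad k).add ((cadlagOn_bump _ _).const_smul _)
    · exact hω
  · dsimp only
    split_ifs with hk
    · have hle : ∑ j ∈ Finset.range (k + 1), ‖a j‖ ≤ ∑ j ∈ Finset.range N, ‖a j‖ :=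
        Finset.sum_le_sum_of_subset_of_nonneg (by
          intro j hj
          simp only [Finset.mem_range] at hj ⊢
          omega) fun _ _ _ => norm_nonneg _
      refine le_trans ?_ (mul_le_mul_of_nonneg_left hle (abs_nonneg ε))
      have heq : (ω + ε • S k + θ k • bump T (τ k) (ε • a k)) s - ω s
          = ε • (∑ j ∈ Finset.range k, bump T (τ j) (a j) s + θ k • bump T (τ k) (a k) s) := by
        rw [bump_smul]
        simp only [Pi.add_apply, Pi.smul_apply, S, Finset.sum_apply, smul_add]
        rw [smul_comm (θ k) ε]
        abel
      rw [heq, norm_smul, Real.norm_eq_abs, Finset.sum_range_succ]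
      refine mul_le_mul_of_nonneg_left ?_ (abs_nonneg ε)
      refine (norm_add_le _ _).trans (add_le_add ?_ ?_)
      · exact (norm_sum_le _ _).trans (Finset.sum_le_sum fun j _ => norm_bump_le _ _ _)
      · rw [norm_smul, Real.norm_eq_abs, abs_of_pos (hθ k).1]
        exact (mul_le_of_le_one_left (norm_nonneg _) (hθ k).2.le).trans (norm_bump_le _ _ _)
    · simp only [sub_self, norm_zero]
      positivity
  · have htel := Finset.sum_range_sub (fun k => f (ω + ε • S k)) N
    have h0 : ω + ε • S 0 = ω := by simp [S]
    rw [h0] at htel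
    rw [← htel, Finset.mul_sum]
    refine Finset.sum_congr rfl fun k hk => ?_
    have hk' := Finset.mem_range.1 hk
    rw [hθ' k hk', Finset.mul_sum]
    simp only [if_pos hk']
    refine Finset.sum_congr rfl fun i _ => ?_
    simp only [Pi.smul_apply, smul_eq_mul]
    ring

/-- In the left-limit property the monotonicity of the times is superfluous. -/
lemma HasLeftLimits.exists_tendsto {F : (ℝ → Fin d → ℝ) → ℝ → Fin d → ℝ}
    (hF : HasLeftLimits T F) {ω : ℝ → Fin d → ℝ} (hω : CadlagOn T ω) {t : ℝ}
    (ht : t ∈ Ioc 0 T) :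
    ∃ l : Fin d → ℝ, ∀ (ωs : ℕ → ℝ → Fin d → ℝ) (ts : ℕ → ℝ),
      (∀ n, CadlagOn T (ωs n)) → TendstoUniformlyOn ωs ω atTop (Icc 0 T) →
      Tendsto ts atTop (𝓝[<] t) → Tendsto (fun n => F (ωs n) (ts n)) atTop (𝓝 l) := by
  obtain ⟨l, hl⟩ := hF ω hω t ht
  refine ⟨l, fun ωs ts hωs hunif hts => tendsto_of_subseq_tendsto fun ns hns => ?_⟩
  obtain ⟨m, hm⟩ := eventually_atTop.1 ((hts.comp hns).eventually self_mem_nhdsWithin)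
  have hlt : ∀ n, ts (ns (m + n)) < t := fun n => hm _ (Nat.le_add_right m n)
  obtain ⟨φ, hφ⟩ := exists_increasing_or_nonincreasing_subseq (· ≤ ·) (fun n => ts (ns (m + n)))
  have hφtop : Tendsto (fun n => ns (m + φ n)) atTop atTop :=
    hns.comp (tendsto_atTop_mono (fun n => Nat.le_add_left _ m) φ.strictMono.tendsto_atTop)
  have hts' : Tendsto (fun n => ts (ns (m + φ n))) atTop (𝓝 t) :=
    (hts.mono_right nhdsWithin_le_nhds).comp hφtop
  refine ⟨fun n => m + φ n, hl _ _ (fun n => hωs _) (fun u hu => hφtop.eventually (hunif u hu))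
    (fun n => hlt _) ?_ hts'⟩
  rcases hφ with hφ | hφ
  · exact monotone_nat_of_le_succ fun n => hφ n (n + 1) n.lt_succ_self
  · exfalso
    refine (hlt (φ 0)).not_ge (le_of_tendsto hts' ?_)
    filter_upwards [eventually_gt_atTop 0] with n hn
    exact (not_le.1 (hφ 0 n hn)).le

/-- A function on the line agrees with its left limits outside a countable set. -/
lemma countable_ne_of_tendsto_left {E : Type*} [MetricSpace E] {φ l : ℝ → E}
    {A : Set ℝ} (h : ∀ t ∈ A, Tendsto φ (𝓝[<] t) (𝓝 (l t))) : {t ∈ A | φ t ≠ l t}.Countable := by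
  let B : ℕ → Set ℝ := fun n => {t ∈ A | 1 / ((n : ℝ) + 1) < dist (φ t) (l t)}
  have hB : ∀ n, (B n).Countable := by
    intro n
    refine (countable_setOfPred_isolated_left_within (s := B n)).mono fun t ht => ?_
    refine mem_sep (s := B n) ht ?_
    have hδ : (0 : ℝ) < 1 / ((n : ℝ) + 1) / 2 := by positivity
    obtain ⟨u, hu, hut⟩ := mem_nhdsLT_iff_exists_Ioo_subset.1
      ((h t ht.1) (Metric.ball_mem_nhds (l t) hδ))
    rw [← empty_mem_iff_bot]
    filter_upwards [self_mem_nhdsWithin,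
      nhdsWithin_mono t inter_subset_right (Ioo_mem_nhdsLT hu)] with x hx hx'
    have h1 : dist (φ x) (l t) < 1 / ((n : ℝ) + 1) / 2 := hut hx'
    have h2 : dist (l x) (l t) ≤ 1 / ((n : ℝ) + 1) / 2 := by
      refine le_of_tendsto ((h x hx.1.1).dist tendsto_const_nhds) ?_
      filter_upwards [Ioo_mem_nhdsLT hx'.1] with y hy
      exact (hut ⟨hy.1, hy.2.trans hx'.2⟩ : dist (φ y) (l t) < _).le
    have h3 := dist_triangle_right (φ x) (l x) (l t)
    have h4 : 1 / ((n : ℝ) + 1) < dist (φ x) (l x) := hx.1.2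
    linarith
  refine (countable_iUnion hB).mono fun t ht => ?_
  obtain ⟨n, hn⟩ := exists_nat_one_div_lt (dist_pos.2 ht.2)
  exact mem_iUnion.2 ⟨n, ht.1, hn⟩

/-- The `k`-th point of the uniform grid with `N` cells on `[0, T]`. -/
noncomputable def gridPoint (T : ℝ) (N k : ℕ) : ℝ := T * k / N

/-- The index `k` of the cell `(gridPoint T N k, gridPoint T N (k + 1)]` that contains `s`. -/
noncomputable def gridIndex (T : ℝ) (N : ℕ) (s : ℝ) : ℕ := ⌈s * N / T⌉₊ - 1

lemma gridPoint_zero (N : ℕ) : gridPoint T N 0 = 0 := by simp [gridPoint]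

lemma gridPoint_self {N : ℕ} (hN : 0 < N) : gridPoint T N N = T := by
  have : (N : ℝ) ≠ 0 := by positivity
  simp [gridPoint, this]

lemma gridPoint_mono (hT : 0 < T) (N : ℕ) : Monotone (gridPoint T N) := fun a b hab => by
  unfold gridPoint
  gcongr

lemma gridPoint_succ (N k : ℕ) : gridPoint T N (k + 1) = gridPoint T N k + T / N := by
  simp only [gridPoint]
  push_cast
  ring

lemma gridPoint_mem (hT : 0 < T) {N k : ℕ} (hN : 0 < N) (hk : k ≤ N) :
    gridPoint T N k ∈ Icc 0 T := by
  constructor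
  · rw [← gridPoint_zero (T := T) N]
    exact gridPoint_mono hT N (Nat.zero_le k)
  · exact (gridPoint_mono hT N hk).trans_eq (gridPoint_self hN)

lemma gridPoint_le_iff (hT : 0 < T) {N : ℕ} (hN : 0 < N) (k : ℕ) (s : ℝ) :
    gridPoint T N k ≤ s ↔ (k : ℝ) ≤ s * N / T := by
  have : (0 : ℝ) < N := by positivity
  rw [gridPoint, div_le_iff₀ this, le_div_iff₀ hT, mul_comm T]

lemma mem_Ioc_gridIndex (hT : 0 < T) {N : ℕ} (hN : 0 < N) {s : ℝ} (hs : 0 < s) :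
    s ∈ Ioc (gridPoint T N (gridIndex T N s)) (gridPoint T N (gridIndex T N s + 1)) := by
  have hN' : (0 : ℝ) < N := by positivity
  have hpos : 0 < s * N / T := by positivity
  have h1 : 0 < ⌈s * N / T⌉₊ := Nat.ceil_pos.2 hpos
  have h2 : gridIndex T N s + 1 = ⌈s * N / T⌉₊ := by unfold gridIndex; omega
  constructor
  · have h3 : ((gridIndex T N s : ℕ) : ℝ) < s * N / T := Nat.lt_ceil.1 (by omega)
    rw [lt_div_iff₀ hT] at h3
    rw [gridPoint, div_lt_iff₀ hN', mul_comm T]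
    exact h3
  · have h3 : s * N / T ≤ ((gridIndex T N s + 1 : ℕ) : ℝ) := h2 ▸ Nat.le_ceil _
    rw [div_le_iff₀ hT] at h3
    rw [gridPoint, le_div_iff₀ hN', mul_comm T]
    exact h3

lemma gridIndex_eq (hT : 0 < T) {N k : ℕ} (hN : 0 < N) {s : ℝ}
    (hs : s ∈ Ioc (gridPoint T N k) (gridPoint T N (k + 1))) : gridIndex T N s = k := by
  have h0 : 0 ≤ gridPoint T N k := by
    rw [← gridPoint_zero (T := T) N]
    exact gridPoint_mono hT N (Nat.zero_le k)
  have h := mem_Ioc_gridIndex hT hN (h0.trans_lt hs.1)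
  rcases lt_trichotomy (gridIndex T N s) k with h' | h' | h'
  · exact absurd (h.2.trans (gridPoint_mono hT N h')) hs.1.not_ge
  · exact h'
  · exact absurd (hs.2.trans (gridPoint_mono hT N h')) h.1.not_ge

lemma gridIndex_lt (hT : 0 < T) {N : ℕ} (hN : 0 < N) {s : ℝ} (hs : s ∈ Ioc 0 T) :
    gridIndex T N s < N := by
  by_contra! h
  have h1 := (mem_Ioc_gridIndex hT hN hs.1).1
  have h2 := gridPoint_mono hT N h
  rw [gridPoint_self hN] at h2
  exact (h1.trans_le hs.2).not_ge h2

lemma measurable_gridIndex (N : ℕ) : Measurable (gridIndex T N) :=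
  (measurable_from_nat (f := fun n => n - 1)).comp
    (Nat.measurable_ceil.comp ((measurable_id.mul_const _).div_const _))

/-- The step path with jump `η (t_{k+1}) - η (t_k)` at each grid point `t_k`, `k < N`. -/
noncomputable def stepPath (T : ℝ) (η : ℝ → Fin d → ℝ) (N : ℕ) : ℝ → Fin d → ℝ :=
  ∑ k ∈ Finset.range N,
    bump T (gridPoint T N k) (η (gridPoint T N (k + 1)) - η (gridPoint T N k))

lemma exists_stepPath_eq (hT : 0 < T) {η : ℝ → Fin d → ℝ} (h0 : η 0 = 0) {N : ℕ} (hN : 0 < N)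
    {t : ℝ} (ht : t ∈ Icc 0 T) :
    ∃ x ∈ Icc 0 T, |x - t| ≤ T / N ∧ stepPath T η N t = η x := by
  have hN' : (0 : ℝ) < N := by positivity
  have hnn : 0 ≤ t * N / T := div_nonneg (mul_nonneg ht.1 hN'.le) hT.le
  set m := min (⌊t * N / T⌋₊ + 1) N with hm
  have hmN : m ≤ N := min_le_right _ _
  have hstep : stepPath T η N t = η (gridPoint T N m) := by
    have h1 : stepPath T η N t = ∑ k ∈ Finset.range N, if k ∈ Finset.range m then
        η (gridPoint T N (k + 1)) - η (gridPoint T N k) else 0 := by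
      rw [stepPath, Finset.sum_apply]
      refine Finset.sum_congr rfl fun k hk => ?_
      have hkN := Finset.mem_range.1 hk
      split_ifs with hkm
      · refine bump_of_mem ⟨(gridPoint_le_iff hT hN k t).2 ?_, ht.2⟩ _
        rw [Finset.mem_range, hm, lt_min_iff] at hkm
        exact (Nat.le_floor_iff hnn).1 (Nat.lt_succ_iff.1 hkm.1)
      · refine bump_of_lt (lt_of_not_ge fun h => hkm ?_) _
        rw [Finset.mem_range, hm, lt_min_iff]
        exact ⟨Nat.lt_succ_iff.2 ((Nat.le_floor_iff hnn).2 ((gridPoint_le_iff hT hN k t).1 h)), hkN⟩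
    rw [h1, Finset.sum_ite_mem, Finset.inter_eq_right.2 (Finset.range_mono hmN),
      Finset.sum_range_sub (fun k => η (gridPoint T N k)), gridPoint_zero, h0, sub_zero]
  refine ⟨gridPoint T N m, gridPoint_mem hT hN hmN, ?_, hstep⟩
  have hlow : t ≤ gridPoint T N m := by
    rcases min_choice (⌊t * N / T⌋₊ + 1) N with h | h
    · rw [hm, h]
      by_contra! h'
      have h2 := (gridPoint_le_iff hT hN _ t).1 h'.le
      have h3 := Nat.lt_floor_add_one (t * N / T)
      push_cast at h2
      linarith
    · rw [hm, h, gridPoint_self hN]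
      exact ht.2
  have hup : gridPoint T N m ≤ t + T / N := by
    refine (gridPoint_mono hT N (min_le_left _ _)).trans ?_
    rw [gridPoint_succ]
    gcongr
    exact (gridPoint_le_iff hT hN _ t).2 (Nat.floor_le hnn)
  rw [abs_of_nonneg (sub_nonneg.2 hlow)]
  linarith

lemma tendstoUniformlyOn_stepPath (hT : 0 < T) {η : ℝ → Fin d → ℝ}
    (hη : ContinuousOn η (Icc 0 T)) (h0 : η 0 = 0) :
    TendstoUniformlyOn (stepPath T η) η atTop (Icc 0 T) := by
  rw [Metric.tendstoUniformlyOn_iff]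
  intro δ hδ
  obtain ⟨r, hr, hη'⟩ := Metric.uniformContinuousOn_iff.1
    (isCompact_Icc.uniformContinuousOn_of_continuous hη) δ hδ
  filter_upwards [eventually_gt_atTop 0,
    (tendsto_const_div_atTop_nhds_zero_nat T).eventually_lt_const hr] with N hN hNr t ht
  obtain ⟨x, hx, hxt, h⟩ := exists_stepPath_eq hT h0 hN ht
  rw [h]
  refine hη' t ht x hx ?_
  rw [dist_comm, Real.dist_eq]
  exact hxt.trans_lt hNr

lemma cadlagOn_stepPath (η : ℝ → Fin d → ℝ) (N : ℕ) : CadlagOn T (stepPath T η N) := by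
  unfold stepPath
  generalize Finset.range N = A
  induction A using Finset.cons_induction with
  | empty => exact (continuousOn_const (c := (0 : Fin d → ℝ))).cadlagOn
  | cons a A ha ih =>
    rw [Finset.sum_cons]
    exact (cadlagOn_bump _ _).add ih

section Primitive

variable {g : ℝ → Fin d → ℝ}

lemma intervalIntegrable_grid (hT : 0 < T) (hg : IntegrableOn g (Icc 0 T)) {N k : ℕ} (hk : k < N) :
    IntervalIntegrable g volume (gridPoint T N k) (gridPoint T N (k + 1)) := by
  have hN : 0 < N := by omega
  rw [intervalIntegrable_iff_integrableOn_Ioc_of_le (gridPoint_mono hT N k.le_succ)]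
  exact hg.mono_set fun s hs => ⟨(gridPoint_mem hT hN hk.le).1.trans hs.1.le,
    hs.2.trans (gridPoint_mem hT hN hk).2⟩

lemma primitive_grid_sub (hT : 0 < T) (hg : IntegrableOn g (Icc 0 T)) {N k : ℕ} (hk : k < N) :
    (∫ s in Ioc 0 (gridPoint T N (k + 1)), g s) - ∫ s in Ioc 0 (gridPoint T N k), g s
      = ∫ s in gridPoint T N k..gridPoint T N (k + 1), g s := by
  have hN : 0 < N := by omega
  have h : ∀ j ≤ N, IntervalIntegrable g volume 0 (gridPoint T N j) := fun j hj => by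
    have hj' := gridPoint_mem hT hN hj
    rw [intervalIntegrable_iff_integrableOn_Ioc_of_le hj'.1]
    exact hg.mono_set fun s hs => ⟨hs.1.le, hs.2.trans hj'.2⟩
  rw [← intervalIntegral.integral_of_le (gridPoint_mem hT hN hk).1,
    ← intervalIntegral.integral_of_le (gridPoint_mem hT hN hk.le).1]
  exact intervalIntegral.integral_interval_sub_left (h _ hk) (h _ hk.le)

lemma sum_norm_primitive_grid_sub_le (hT : 0 < T) (hg : IntegrableOn g (Icc 0 T)) {N : ℕ}
    (hN : 0 < N) :
    ∑ k ∈ Finset.range N, ‖(∫ s in Ioc 0 (gridPoint T N (k + 1)), g s)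
      - ∫ s in Ioc 0 (gridPoint T N k), g s‖ ≤ ∫ s in Icc 0 T, ‖g s‖ := by
  calc _ ≤ ∑ k ∈ Finset.range N, ∫ s in gridPoint T N k..gridPoint T N (k + 1), ‖g s‖ := by
        refine Finset.sum_le_sum fun k hk => ?_
        rw [primitive_grid_sub hT hg (Finset.mem_range.1 hk)]
        exact intervalIntegral.norm_integral_le_integral_norm (gridPoint_mono hT N k.le_succ)
    _ = ∫ s in Icc 0 T, ‖g s‖ := by
        rw [intervalIntegral.sum_integral_adjacent_intervals
            fun k hk => (intervalIntegrable_grid hT hg hk).norm,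
          gridPoint_zero, gridPoint_self hN, intervalIntegral.integral_of_le hT.le,
          integral_Icc_eq_integral_Ioc]

lemma sum_primitive_grid_sub_eq (hT : 0 < T) (hg : IntegrableOn g (Icc 0 T)) {N : ℕ}
    (hN : 0 < N) (Φ : ℕ → Fin d → ℝ) :
    ∑ k ∈ Finset.range N, ∑ i, Φ k i * ((∫ s in Ioc 0 (gridPoint T N (k + 1)), g s)
      - ∫ s in Ioc 0 (gridPoint T N k), g s) i
      = ∫ s in Icc 0 T, ∑ i, Φ (gridIndex T N s) i * g s i := by
  let L : ℕ → (Fin d → ℝ) →L[ℝ] ℝ := fun k => ∑ i, Φ k i • ContinuousLinearMap.proj i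
  have hL : ∀ k v, L k v = ∑ i, Φ k i * v i := fun k v => by simp [L]
  have hcell : ∀ k, EqOn (fun s => L k (g s)) (fun s => ∑ i, Φ (gridIndex T N s) i * g s i)
      (Ioc (gridPoint T N k) (gridPoint T N (k + 1))) := fun k s hs => by
    simp only [hL, gridIndex_eq hT hN hs]
  have hint : ∀ k < N, IntervalIntegrable (fun s => ∑ i, Φ (gridIndex T N s) i * g s i) volume
      (gridPoint T N k) (gridPoint T N (k + 1)) := fun k hk => by
    have hle := gridPoint_mono hT N k.le_succ
    rw [intervalIntegrable_iff_integrableOn_Ioc_of_le hle]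
    refine IntegrableOn.congr_fun ?_ (hcell k) measurableSet_Ioc
    exact (L k).integrable_comp
      ((intervalIntegrable_iff_integrableOn_Ioc_of_le hle).1 (intervalIntegrable_grid hT hg hk))
  rw [integral_Icc_eq_integral_Ioc, ← intervalIntegral.integral_of_le hT.le]
  have hsum := intervalIntegral.sum_integral_adjacent_intervals hint
  rw [gridPoint_zero, gridPoint_self hN] at hsum
  rw [← hsum]
  refine Finset.sum_congr rfl fun k hk => ?_
  have hle := gridPoint_mono hT N k.le_succ
  rw [← hL, primitive_grid_sub hT hg (Finset.mem_range.1 hk),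
    ← (L k).intervalIntegral_comp_comm (intervalIntegrable_grid hT hg (Finset.mem_range.1 hk)),
    intervalIntegral.integral_of_le hle, intervalIntegral.integral_of_le hle]
  exact setIntegral_congr_fun measurableSet_Ioc (hcell k)

end Primitive

lemma norm_sum_mul_le (x y : Fin d → ℝ) : ‖∑ i, x i * y i‖ ≤ d * ‖x‖ * ‖y‖ := by
  refine (norm_sum_le _ _).trans ?_
  calc ∑ i, ‖x i * y i‖ ≤ ∑ _i : Fin d, ‖x‖ * ‖y‖ := Finset.sum_le_sum fun i _ => by
        rw [norm_mul]
        exact mul_le_mul (norm_le_pi_norm x i) (norm_le_pi_norm y i) (norm_nonneg _) (norm_nonneg _)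
    _ = d * ‖x‖ * ‖y‖ := by simp [mul_assoc]

lemma tendsto_gridPoint_gridIndex (hT : 0 < T) {N : ℕ → ℕ} (hN : ∀ n, 0 < N n)
    (hNtop : Tendsto N atTop atTop) {s : ℝ} (hs : 0 < s) :
    Tendsto (fun n => gridPoint T (N n) (gridIndex T (N n) s)) atTop (𝓝[<] s) := by
  have h := fun n => mem_Ioc_gridIndex hT (hN n) hs
  refine tendsto_nhdsWithin_iff.2 ⟨?_, Eventually.of_forall fun n => (h n).1⟩
  have hlim : Tendsto (fun n => s - T / (N n : ℝ)) atTop (𝓝 s) := by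
    simpa using tendsto_const_nhds.sub ((tendsto_const_div_atTop_nhds_zero_nat T).comp hNtop)
  refine tendsto_of_tendsto_of_tendsto_of_le_of_le hlim tendsto_const_nhds (fun n => ?_)
    fun n => (h n).1.le
  have := (h n).2
  rw [gridPoint_succ] at this
  dsimp only
  linarith

/-- Passage to the limit in the Riemann-type sums built from paths converging to `ω`. -/
lemma integrableOn_and_tendsto_integral_grid (hT : 0 < T)
    {F : (ℝ → Fin d → ℝ) → ℝ → Fin d → ℝ} (hll : HasLeftLimits T F)
    (hbp : BoundednessPreserving T F) {ω : ℝ → Fin d → ℝ} (hω : CadlagOn T ω)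
    {g : ℝ → Fin d → ℝ} (hg : IntegrableOn g (Icc 0 T)) {N : ℕ → ℕ} (hN : ∀ n, 0 < N n)
    (hNtop : Tendsto N atTop atTop) {ρ : ℕ → ℕ → ℝ → Fin d → ℝ}
    (hρ : ∀ n k, CadlagOn T (ρ n k)) {c : ℕ → ℝ} (hc : Tendsto c atTop (𝓝 0))
    (hρc : ∀ n k s, ‖ρ n k s - ω s‖ ≤ c n) :
    IntegrableOn (fun t => ∑ i, F ω t i * g t i) (Icc 0 T) ∧
    Tendsto (fun n => ∫ s in Icc 0 T, ∑ i, F (ρ n (gridIndex T (N n) s))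
        (gridPoint T (N n) (gridIndex T (N n) s)) i * g s i) atTop
      (𝓝 (∫ t in Icc 0 T, ∑ i, F ω t i * g t i)) := by
  rw [integrableOn_Icc_iff_integrableOn_Ioc] at hg ⊢
  simp only [integral_Icc_eq_integral_Ioc]
  set H : ℕ → ℝ → Fin d → ℝ := fun n s => F (ρ n (gridIndex T (N n) s))
    (gridPoint T (N n) (gridIndex T (N n) s)) with hH
  have hHmeas : ∀ n, Measurable (H n) := fun n =>
    (measurable_from_nat (f := fun k => F (ρ n k) (gridPoint T (N n) k))).comp
      (measurable_gridIndex (N n))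
  choose! l hl using fun t (ht : t ∈ Ioc 0 T) => hll.exists_tendsto hω ht
  have hHl : ∀ s ∈ Ioc 0 T, Tendsto (fun n => H n s) atTop (𝓝 (l s)) := by
    intro s hs
    refine hl s hs _ _ (fun n => hρ n _) ?_ (tendsto_gridPoint_gridIndex hT hN hNtop hs.1)
    rw [Metric.tendstoUniformlyOn_iff]
    intro δ hδ
    filter_upwards [hc.eventually_lt_const hδ] with n hn x _
    rw [dist_comm, dist_eq_norm]
    exact (hρc n _ x).trans_lt hn
  have hleft : ∀ t ∈ Ioc 0 T, Tendsto (F ω) (𝓝[<] t) (𝓝 (l t)) := fun t ht =>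
    tendsto_of_seq_tendsto fun x hx => hl t ht (fun _ => ω) x (fun _ => hω)
      (fun u hu => Eventually.of_forall fun _ s _ => refl_mem_uniformity hu) hx
  have hae : ∀ᵐ s ∂volume.restrict (Ioc 0 T), l s = F ω s := by
    rw [ae_restrict_iff' measurableSet_Ioc]
    filter_upwards [(countable_ne_of_tendsto_left hleft).ae_notMem volume] with s hs hsT
    by_contra h
    exact hs ⟨hsT, fun h' => h h'.symm⟩
  have hHω : ∀ᵐ s ∂volume.restrict (Ioc 0 T), Tendsto (fun n => H n s) atTop (𝓝 (F ω s)) := by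
    filter_upwards [hae, ae_restrict_mem measurableSet_Ioc] with s hs hsT
    rw [← hs]
    exact hHl s hsT
  have hprod : ∀ u : ℝ → Fin d → ℝ, AEStronglyMeasurable u (volume.restrict (Ioc 0 T)) →
      AEStronglyMeasurable (fun s => ∑ i, u s i * g s i) (volume.restrict (Ioc 0 T)) :=
    fun u hu => by
      have hcont : Continuous fun p : (Fin d → ℝ) × (Fin d → ℝ) => ∑ i, p.1 i * p.2 i := by
        fun_prop
      exact hcont.comp_aestronglyMeasurable (hu.prodMk hg.aestronglyMeasurable)
  have hFmeas : AEStronglyMeasurable (F ω) (volume.restrict (Ioc 0 T)) :=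
    aestronglyMeasurable_of_tendsto_ae atTop (fun n => (hHmeas n).aestronglyMeasurable) hHω
  obtain ⟨C, hC⟩ := hω.exists_norm_le
  obtain ⟨M, hM⟩ := hbp (|C| + 1) (by positivity)
  have hbound : ∀ u v : Fin d → ℝ, ‖u‖ ≤ M → ‖∑ i, u i * v i‖ ≤ d * M * ‖v‖ := fun u v hu =>
    (norm_sum_mul_le u v).trans (by gcongr)
  have hdom : Integrable (fun s => d * M * ‖g s‖) (volume.restrict (Ioc 0 T)) :=
    hg.norm.const_mul _
  refine ⟨hdom.mono' (hprod _ hFmeas) ?_, ?_⟩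
  · filter_upwards [ae_restrict_mem measurableSet_Ioc] with s hs
    exact hbound _ _ (hM ω hω (fun x hx => ((hC x hx).trans (le_abs_self C)).trans_lt
      (lt_add_one _)) s (Ioc_subset_Icc_self hs))
  · refine tendsto_integral_filter_of_dominated_convergence (fun s => d * M * ‖g s‖)
      (Eventually.of_forall fun n => hprod _ (hHmeas n).aestronglyMeasurable) ?_ hdom ?_
    · filter_upwards [hc.eventually_lt_const zero_lt_one] with n hn
      filter_upwards [ae_restrict_mem measurableSet_Ioc] with s hs
      refine hbound _ _ (hM _ (hρ n _) (fun x hx => ?_) _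
        (gridPoint_mem hT (hN n) (gridIndex_lt hT (hN n) hs).le))
      calc ‖ρ n (gridIndex T (N n) s) x‖
          = ‖ω x + (ρ n (gridIndex T (N n) s) x - ω x)‖ := by rw [add_sub_cancel]
        _ ≤ ‖ω x‖ + ‖ρ n (gridIndex T (N n) s) x - ω x‖ := norm_add_le _ _
        _ < |C| + 1 := add_lt_add_of_le_of_lt ((hC x hx).trans (le_abs_self C))
            ((hρc n _ x).trans_lt hn)
    · filter_upwards [hHω] with s hs
      exact tendsto_finsetSum _ fun i _ => ((continuous_apply i).tendsto _ |>.comp hs).mul_const _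

end Auxiliary

/-- If, in addition to the hypotheses of Statement 3, `𝔻f` has left limits
and is boundedness preserving, then for every càdlàg `ω` and every absolutely continuous path
`η_t = ∫_0^t g_s ds` with `g ∈ L¹([0,T];ℝ^d)`, the map `t ↦ ⟨𝔻_t f(ω), g_t⟩` is Lebesgue
integrable on `[0,T]` and `lim_{ε→0} (f(ω + εη) − f(ω))/ε = ∫_0^T ⟨𝔻_t f(ω), g_t⟩ dt`. -/
theorem statement_4 (T : ℝ) (hT : 0 < T) {d : ℕ}
    (f : (ℝ → Fin d → ℝ) → ℝ) (Df : (ℝ → Fin d → ℝ) → ℝ → Fin d → ℝ)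
    (hdiff : HasPathwiseMalliavinDeriv T f Df)
    (hfcont : UnifContOnCadlag T f)
    (hDcont : ∀ t ∈ Set.Icc (0 : ℝ) T, UnifContOnCadlagVec T (fun ω => Df ω t))
    (hll : HasLeftLimits T Df)
    (hbp : BoundednessPreserving T Df)
    (ω : ℝ → Fin d → ℝ) (hω : CadlagOn T ω)
    (g : ℝ → Fin d → ℝ) (hg : IntegrableOn g (Set.Icc 0 T)) :
    IntegrableOn (fun t => ∑ i, Df ω t i * g t i) (Set.Icc 0 T) ∧
    Tendsto (fun ε : ℝ =>
        (f (ω + ε • fun t => ∫ s in Set.Ioc (0 : ℝ) t, g s) - f ω) / ε)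
      (nhdsWithin 0 {(0 : ℝ)}ᶜ)
      (nhds (∫ t in Set.Icc (0 : ℝ) T, ∑ i, Df ω t i * g t i)) := by
  have hη : ContinuousOn (fun t => ∫ s in Ioc (0 : ℝ) t, g s) (Icc 0 T) :=
    intervalIntegral.continuousOn_primitive hg
  refine ⟨(integrableOn_and_tendsto_integral_grid hT hll hbp hω hg (N := fun n => n + 1)
    (fun n => n.succ_pos) (tendsto_add_atTop_nat 1) (ρ := fun _ _ => ω) (c := fun _ => 0)
    (fun _ _ => hω) tendsto_const_nhds (fun _ _ _ => by simp)).1, ?_⟩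
  set η : ℝ → Fin d → ℝ := fun t => ∫ s in Ioc (0 : ℝ) t, g s with hηdef
  have hη0 : η 0 = 0 := by simp [hηdef]
  refine tendsto_of_seq_tendsto fun ε hε => ?_
  have hε0 : Tendsto ε atTop (nhds 0) := hε.mono_right nhdsWithin_le_nhds
  have hεne : ∀ᶠ n in atTop, ε n ≠ 0 := hε.eventually self_mem_nhdsWithin
  have hex : ∀ n, ∃ N, n + 1 ≤ N ∧ (ε n ≠ 0 →
      |f (ω + ε n • stepPath T η N) - f (ω + ε n • η)| < ε n ^ 2) := by
    intro n
    by_cases h0 : ε n = 0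
    · exact ⟨n + 1, le_rfl, fun h => absurd h0 h⟩
    have hunif : TendstoUniformlyOn (fun N => ω + ε n • stepPath T η N) (ω + ε n • η) atTop
        (Icc 0 T) := by
      have h1 := (tendstoUniformlyOn_stepPath hT hη hη0)
      rw [Metric.tendstoUniformlyOn_iff] at h1 ⊢
      intro δ hδ
      filter_upwards [h1 (δ / |ε n|) (by positivity)] with N hN x hx
      have h2 := hN x hx
      rw [lt_div_iff₀ (abs_pos.2 h0)] at h2
      simp only [Pi.add_apply, Pi.smul_apply]
      rwa [dist_add_left, dist_smul₀, Real.norm_eq_abs, mul_comm]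
    have hlim := hfcont _ _ (hω.add (hη.cadlagOn.const_smul (ε n)))
      (fun N => hω.add ((cadlagOn_stepPath η N).const_smul (ε n))) hunif
    obtain ⟨N, hN, hN'⟩ := ((Metric.tendsto_nhds.1 hlim (ε n ^ 2) (by positivity)).and
      (eventually_ge_atTop (n + 1))).exists
    exact ⟨N, hN', fun _ => hN⟩
  choose N hNge hNf using hex
  have hNpos : ∀ n, 0 < N n := fun n => (Nat.succ_pos n).trans_le (hNge n)
  have hNtop : Tendsto N atTop atTop :=
    tendsto_atTop_mono (fun n => n.le_succ.trans (hNge n)) tendsto_id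
  choose ρ hρ hρc hρf using fun n => hdiff.exists_sum_eq hω (ε n) (gridPoint T (N n))
    (fun k => η (gridPoint T (N n) (k + 1)) - η (gridPoint T (N n) k)) (N n)
    (fun k hk => gridPoint_mem hT (hNpos n) hk.le)
  have hc : Tendsto (fun n => |ε n| * ∫ s in Icc 0 T, ‖g s‖) atTop (nhds 0) := by
    simpa using hε0.abs.mul_const (∫ s in Icc 0 T, ‖g s‖)
  have hmain := (integrableOn_and_tendsto_integral_grid hT hll hbp hω hg hNpos hNtop hρ hc
    fun n k s => (hρc n k s).trans (mul_le_mul_of_nonneg_left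
      (sum_norm_primitive_grid_sub_le hT hg (hNpos n)) (abs_nonneg _))).2
  have herr : Tendsto (fun n => (f (ω + ε n • η) - f (ω + ε n • stepPath T η (N n))) / ε n)
      atTop (nhds 0) := by
    refine squeeze_zero_norm' ?_ (by simpa using hε0.abs)
    filter_upwards [hεne] with n hn
    have hpos := abs_pos.2 hn
    rw [norm_div, Real.norm_eq_abs, Real.norm_eq_abs, div_le_iff₀ hpos, abs_sub_comm,
      abs_mul_abs_self, ← pow_two]
    exact (hNf n hn).le
  have hsum := herr.add hmain
  rw [zero_add] at hsum
  refine hsum.congr' ?_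
  filter_upwards [hεne] with n hn
  have h1 := sum_primitive_grid_sub_eq hT hg (hNpos n)
    fun k => Df (ρ n k) (gridPoint T (N n) k)
  have h2 := hρf n
  rw [← stepPath] at h2
  rw [← h1, Function.comp_apply, ← sub_add_sub_cancel _ (f (ω + ε n • stepPath T η (N n))) (f ω),
    add_div, h2, mul_div_cancel_left₀ _ hn]
end

section
/- Define, for δ > 0, V(δ) = sup { E_π[f(Y)] − L_δ(E_π[c_N(X, Y)]^{1/p}) : π ∈ Π_c(μ, *) with E_π[c_N(X, Y)] < ∞ }, and V(0) = E_μ[f(X)]. Then lim_{δ→0+} (V(δ) − V(0))/δ = L*( ‖ᵒ𝔻f‖_{L^q(μ)} ) = L*( ( Σ_{n=1}^N E_μ[ |E_μ[𝔻_n f(X) | F_n]|_*^q ] )^{1/q} ); in particular V(δ) = V(0) + L*(‖ᵒ𝔻f‖_{L^q(μ)}) δ + o(δ) as δ → 0+. -/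
open MeasureTheory Filter Set
open scoped ENNReal

noncomputable section

/-- Discrete path space `X = (ℝ^d)^N`. -/
abbrev PathD (N d : ℕ) : Type := Fin N → Fin d → ℝ

/-- The `ℓ_e` norm on `ℝ^d`. -/
def lpnorm {d : ℕ} (e : ℝ) (v : Fin d → ℝ) : ℝ := (∑ i, |v i| ^ e) ^ (1 / e)

/-- Coordinate `x_n` of a path, with the convention `x_0 = 0` (and `x_n = 0` for `n > N`). -/
def coord {N d : ℕ} (x : PathD N d) (n : ℕ) : Fin d → ℝ :=
  if h : 1 ≤ n ∧ n ≤ N then x ⟨n - 1, by omega⟩ else 0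

/-- The cost `c_N(x,y) = Σ_{n=1}^N |Δx_n − Δy_n|^p` (with `|·|` the `ℓ_p` norm). -/
def cN {N d : ℕ} (p : ℝ) (x y : PathD N d) : ℝ :=
  ∑ n ∈ Finset.Icc 1 N,
    lpnorm p ((coord x n - coord x (n - 1)) - (coord y n - coord y (n - 1))) ^ p

/-- The σ-algebra `F_n = σ(x_1, …, x_n)` on the discrete path space. -/
def Fn (N d n : ℕ) : MeasurableSpace (PathD N d) :=
  MeasurableSpace.comap (fun x (i : Fin N) => if (i : ℕ) + 1 ≤ n then x i else 0) inferInstance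

/-- Conditional independence of `m₁` and `m₂` given `m'` under `π`, expressed through
conditional expectations of indicators. -/
def CondIndepOn {Ω : Type*} [MeasurableSpace Ω] (π : Measure Ω)
    (m' m₁ m₂ : MeasurableSpace Ω) : Prop :=
  ∀ A B : Set Ω, MeasurableSet[m₁] A → MeasurableSet[m₂] B →
    (π[(A ∩ B).indicator (fun _ => (1 : ℝ)) | m']) =ᵐ[π]
      (π[A.indicator (fun _ => (1 : ℝ)) | m']) * (π[B.indicator (fun _ => (1 : ℝ)) | m'])

/-- `π` is a coupling with first marginal `μ` which is causal to its second marginal: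
for every `n`, `σ(Y_1,…,Y_n)` is conditionally independent of `σ(X_1,…,X_N)` given `F_n`. -/
def IsCausalStar {N d : ℕ} (μ : Measure (PathD N d))
    (π : Measure (PathD N d × PathD N d)) : Prop :=
  π.map Prod.fst = μ ∧
  ∀ n : ℕ, CondIndepOn π ((Fn N d n).comap Prod.fst)
    ((Fn N d n).comap Prod.snd) ((Fn N d N).comap Prod.fst)

/-- `π` is a causal coupling of `(μ, ν)`. -/
def IsCausalCoupling {N d : ℕ} (μ ν : Measure (PathD N d))
    (π : Measure (PathD N d × PathD N d)) : Prop :=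
  π.map Prod.snd = ν ∧ IsCausalStar μ π

/-- `π` is a bicausal coupling of `(μ, ν)`: both `π` and its swap are causal. -/
def IsBicausalCoupling {N d : ℕ} (μ ν : Measure (PathD N d))
    (π : Measure (PathD N d × PathD N d)) : Prop :=
  IsCausalCoupling μ ν π ∧
  (∀ n : ℕ, CondIndepOn π ((Fn N d n).comap Prod.snd)
    ((Fn N d n).comap Prod.fst) ((Fn N d N).comap Prod.snd))

/-- `μ` is a martingale measure on the discrete path space: every coordinate is integrable
and `E_μ[X_n | F_{n−1}] = X_{n−1}` a.s. (with `X_0 = 0`). -/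
def IsMartingaleMeasure {N d : ℕ} (μ : Measure (PathD N d)) : Prop :=
  ∀ n : ℕ, 1 ≤ n → n ≤ N →
    Integrable (fun x => coord x n) μ ∧
    (μ[(fun x => coord x n) | Fn N d (n - 1)]) =ᵐ[μ] (fun x => coord x (n - 1))


/-- The discrete pathwise Malliavin derivative `𝔻_n f = Σ_{k=n}^N ∂_k f`, where `∂_k f` is the
`ℝ^d`-valued partial gradient of `f` in the `k`-th coordinate block (`k = 1, …, N`). -/
def Dn {N d : ℕ} (f : PathD N d → ℝ) (n : ℕ) (x : PathD N d) : Fin d → ℝ :=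
  fun j => ∑ k : Fin N, if n ≤ (k : ℕ) + 1 then
    fderiv ℝ f x (Pi.single k (Pi.single j 1)) else 0

/-- Standing assumptions on the penalty function `L : [0,∞) → [0,∞]`:
continuous, non-decreasing, `L(0) = 0` and `liminf_{u→∞} L(u)/u^p = +∞`. -/
structure PenaltyAssumptions (p : ℝ) (L : ℝ → ℝ≥0∞) : Prop where
  cont : ContinuousOn L (Set.Ici 0)
  mono : MonotoneOn L (Set.Ici 0)
  zero : L 0 = 0
  growth : Tendsto (fun u : ℝ => L u / ENNReal.ofReal (u ^ p)) atTop (nhds ⊤)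

/-- The convex conjugate `L*(v) = sup_{u ≥ 0} { u v − L(u) }`, valued in the extended reals. -/
def Lconj (L : ℝ → ℝ≥0∞) (v : ℝ) : EReal :=
  ⨆ u : {u : ℝ // 0 ≤ u}, ((u.1 * v : ℝ) : EReal) - ((L u.1 : ℝ≥0∞) : EReal)

/-- The expected transport cost `E_π[c_N(X,Y)]` of a coupling. -/
def costD {N d : ℕ} (p : ℝ) (π : Measure (PathD N d × PathD N d)) : ℝ :=
  ∫ z, cN p z.1 z.2 ∂π

/-- The penalised causal DRO value
`V(δ) = sup_{π ∈ Π_c(μ,*), E_π[c_N] < ∞} { E_π[f(Y)] − δ L(E_π[c_N(X,Y)]^{1/p}/δ) }`,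
valued in the extended reals. -/
def VD {N d : ℕ} (p : ℝ) (L : ℝ → ℝ≥0∞) (μ : Measure (PathD N d))
    (f : PathD N d → ℝ) (δ : ℝ) : EReal :=
  ⨆ π : {π : Measure (PathD N d × PathD N d) //
      IsProbabilityMeasure π ∧ IsCausalStar μ π ∧
      Integrable (fun z => cN p z.1 z.2) π},
    ((∫ z, f z.2 ∂π.1 : ℝ) : EReal) -
      ((ENNReal.ofReal δ * L ((costD p π.1) ^ (1 / p) / δ) : ℝ≥0∞) : EReal)

/-- The `L^q(μ)`-norm `(Σ_{n=1}^N E_μ[|E_μ[𝔻_n f(X)|F_n]|_*^q])^{1/q}` of the optional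
projection of the discrete pathwise Malliavin derivative. -/
def optionalNorm {N d : ℕ} (q : ℝ) (μ : Measure (PathD N d)) (f : PathD N d → ℝ) : ℝ :=
  (∑ n ∈ Finset.Icc 1 N, ∫ x, lpnorm q ((μ[Dn f n | Fn N d n]) x) ^ q ∂μ) ^ (1 / q)

/-- The map `v(e) = (e_1|e_1|^{q−2}, …, e_d|e_d|^{q−2})` on `ℝ^d`. -/
def vmap {d : ℕ} (q : ℝ) (e : Fin d → ℝ) : Fin d → ℝ :=
  fun i => e i * |e i| ^ (q - 2)

/-- The inverse `Δ^{-1}` of the increment map: `(Δ^{-1} y)_n = Σ_{k=1}^n y_k`. -/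
def DeltaInv {N d : ℕ} (y : PathD N d) : PathD N d :=
  fun i => ∑ k : Fin N, if (k : ℕ) ≤ (i : ℕ) then y k else 0

/-- A process `h = (h_n)_{n=1}^N` is predictable if `h_n` is `F_{n−1}`-measurable. -/
def IsPredictable {N d : ℕ} (h : ℕ → PathD N d → Fin d → ℝ) : Prop :=
  ∀ n : ℕ, 1 ≤ n → n ≤ N → Measurable[Fn N d (n - 1)] (h n)

end

open MeasureTheory Filter

section

open scoped Topology

section TaylorRemainder

variable {E : Type*} [NormedAddCommGroup E] [NormedSpace ℝ E]

/-- Monotonicity-type splitting of powers: `(a + b) ^ r ≤ 2 ^ r * (a ^ r + b ^ r)`. -/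
lemma add_rpow_le_two_rpow_mul {a b r : ℝ} (ha : 0 ≤ a) (hb : 0 ≤ b) (hr : 0 ≤ r) :
    (a + b) ^ r ≤ 2 ^ r * (a ^ r + b ^ r) := by
  have hmax : a + b ≤ 2 * max a b := by
    linarith [le_max_left a b, le_max_right a b]
  calc (a + b) ^ r ≤ (2 * max a b) ^ r := Real.rpow_le_rpow (by positivity) hmax hr
    _ = 2 ^ r * (max a b) ^ r := Real.mul_rpow (by norm_num) (le_max_of_le_left ha)
    _ ≤ 2 ^ r * (a ^ r + b ^ r) := by
      gcongr
      rcases max_choice a b with h | h <;> rw [h]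
      · linarith [Real.rpow_nonneg hb r]
      · linarith [Real.rpow_nonneg ha r]

lemma norm_fderiv_add_sub_le {f : E → ℝ} {p A : ℝ} (hp : 1 < p)
    (hA : ∀ x, ‖fderiv ℝ f x‖ ≤ A * (1 + ‖x‖ ^ (p - 1))) :
    ∃ B, 0 ≤ B ∧ ∀ x h, ‖fderiv ℝ f (x + h) - fderiv ℝ f x‖ ≤
      B * (1 + ‖x‖ ^ (p - 1)) + B * ‖h‖ ^ (p - 1) := by
  have hA0 : 0 ≤ A := by
    have h0 := (norm_nonneg _).trans (hA 0)
    rwa [norm_zero, Real.zero_rpow (by linarith), add_zero, mul_one] at h0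
  have hr : 0 ≤ p - 1 := by linarith
  refine ⟨A * (2 + 2 ^ (p - 1)), by positivity, fun x h => ?_⟩
  have h1 := hA (x + h)
  have h2 := hA x
  have h3 : ‖x + h‖ ^ (p - 1) ≤ 2 ^ (p - 1) * (‖x‖ ^ (p - 1) + ‖h‖ ^ (p - 1)) :=
    (Real.rpow_le_rpow (norm_nonneg _) (norm_add_le x h) hr).trans
      (add_rpow_le_two_rpow_mul (norm_nonneg _) (norm_nonneg _) hr)
  have h4 := norm_sub_le (fderiv ℝ f (x + h)) (fderiv ℝ f x)
  have h5 : A * ‖x + h‖ ^ (p - 1) ≤ A * (2 ^ (p - 1) * (‖x‖ ^ (p - 1) + ‖h‖ ^ (p - 1))) := by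
    gcongr
  have h6 : 0 ≤ A * ‖x‖ ^ (p - 1) := by positivity
  have h7 : 0 ≤ A * ‖h‖ ^ (p - 1) := by positivity
  have h8 : 0 ≤ A * 2 ^ (p - 1) := by positivity
  nlinarith

/-- The penalised oscillation of the derivative, `sup_h (‖Df(x+h) - Df(x)‖ - K ‖h‖ ^ r)`. -/
noncomputable def penalizedOsc (f : E → ℝ) (r K : ℝ) (x : E) : ℝ :=
  ⨆ h : E, (‖fderiv ℝ f (x + h) - fderiv ℝ f x‖ - K * ‖h‖ ^ r)

lemma penalizedOsc_term_le {f : E → ℝ} {r B K : ℝ}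
    (hB : ∀ x h, ‖fderiv ℝ f (x + h) - fderiv ℝ f x‖ ≤ B * (1 + ‖x‖ ^ r) + B * ‖h‖ ^ r)
    (hK : B ≤ K) (x h : E) :
    ‖fderiv ℝ f (x + h) - fderiv ℝ f x‖ - K * ‖h‖ ^ r ≤ B * (1 + ‖x‖ ^ r) := by
  have h1 : B * ‖h‖ ^ r ≤ K * ‖h‖ ^ r := by gcongr
  linarith [hB x h]

lemma bddAbove_penalizedOsc {f : E → ℝ} {r B K : ℝ}
    (hB : ∀ x h, ‖fderiv ℝ f (x + h) - fderiv ℝ f x‖ ≤ B * (1 + ‖x‖ ^ r) + B * ‖h‖ ^ r)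
    (hK : B ≤ K) (x : E) :
    BddAbove (range fun h : E => ‖fderiv ℝ f (x + h) - fderiv ℝ f x‖ - K * ‖h‖ ^ r) :=
  ⟨_, forall_mem_range.2 (penalizedOsc_term_le hB hK x)⟩

lemma penalizedOsc_le {f : E → ℝ} {r B K : ℝ}
    (hB : ∀ x h, ‖fderiv ℝ f (x + h) - fderiv ℝ f x‖ ≤ B * (1 + ‖x‖ ^ r) + B * ‖h‖ ^ r)
    (hK : B ≤ K) (x : E) : penalizedOsc f r K x ≤ B * (1 + ‖x‖ ^ r) :=
  ciSup_le (penalizedOsc_term_le hB hK x)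

lemma norm_fderiv_sub_le_penalizedOsc {f : E → ℝ} {r B K : ℝ}
    (hB : ∀ x h, ‖fderiv ℝ f (x + h) - fderiv ℝ f x‖ ≤ B * (1 + ‖x‖ ^ r) + B * ‖h‖ ^ r)
    (hK : B ≤ K) (x h : E) :
    ‖fderiv ℝ f (x + h) - fderiv ℝ f x‖ ≤ penalizedOsc f r K x + K * ‖h‖ ^ r := by
  have := le_ciSup (bddAbove_penalizedOsc hB hK x) h
  simp only [penalizedOsc]
  linarith

lemma penalizedOsc_nonneg {f : E → ℝ} {r B K : ℝ}
    (hB : ∀ x h, ‖fderiv ℝ f (x + h) - fderiv ℝ f x‖ ≤ B * (1 + ‖x‖ ^ r) + B * ‖h‖ ^ r)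
    (hr : 0 < r) (hK : B ≤ K) (x : E) : 0 ≤ penalizedOsc f r K x := by
  have := norm_fderiv_sub_le_penalizedOsc hB hK x 0
  simpa [Real.zero_rpow hr.ne'] using this

lemma measurable_penalizedOsc [MeasurableSpace E] [BorelSpace E] {f : E → ℝ} {r B K : ℝ}
    (hB : ∀ x h, ‖fderiv ℝ f (x + h) - fderiv ℝ f x‖ ≤ B * (1 + ‖x‖ ^ r) + B * ‖h‖ ^ r)
    (hf : ContDiff ℝ 1 f) (hK : B ≤ K) : Measurable (penalizedOsc f r K) := by
  have hc : Continuous (fderiv ℝ f) := hf.continuous_fderiv one_ne_zero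
  refine LowerSemicontinuous.measurable
    (lowerSemicontinuous_ciSup (bddAbove_penalizedOsc hB hK) fun h => ?_)
  exact Continuous.lowerSemicontinuous (by fun_prop)

lemma tendsto_penalizedOsc {f : E → ℝ} {r B : ℝ}
    (hB : ∀ x h, ‖fderiv ℝ f (x + h) - fderiv ℝ f x‖ ≤ B * (1 + ‖x‖ ^ r) + B * ‖h‖ ^ r)
    (hf : ContDiff ℝ 1 f) (hr : 0 < r) (x : E) :
    Tendsto (fun n : ℕ => penalizedOsc f r (B + n) x) atTop (𝓝 0) := by
  have hc : Continuous (fderiv ℝ f) := hf.continuous_fderiv one_ne_zero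
  rw [Metric.tendsto_atTop]
  intro ε hε
  have hcx : ContinuousAt (fun h => fderiv ℝ f (x + h)) 0 := by fun_prop
  obtain ⟨s, hs, hsx⟩ := Metric.continuousAt_iff.1 hcx (ε / 2) (by positivity)
  obtain ⟨n₀, hn₀⟩ := exists_nat_ge (B * (1 + ‖x‖ ^ r) / s ^ r)
  refine ⟨n₀, fun n hn => ?_⟩
  have hBn : B ≤ B + n := le_add_of_nonneg_right n.cast_nonneg
  rw [Real.dist_eq, sub_zero, abs_of_nonneg (penalizedOsc_nonneg hB hr hBn x)]
  refine lt_of_le_of_lt (ciSup_le fun h => ?_) (half_lt_self hε)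
  have hn0 : (0 : ℝ) ≤ n := n.cast_nonneg
  have hB0 : 0 ≤ B := by
    have := (norm_nonneg _).trans (hB 0 0)
    simpa [Real.zero_rpow hr.ne'] using this
  rcases lt_or_ge ‖h‖ s with hh | hh
  · have h1 : dist (fderiv ℝ f (x + h)) (fderiv ℝ f (x + 0)) < ε / 2 :=
      hsx (by simpa using hh)
    rw [add_zero, dist_eq_norm] at h1
    have : 0 ≤ (B + n) * ‖h‖ ^ r := by positivity
    linarith
  · have hsr : 0 < s ^ r := by positivity
    have h1 : B * (1 + ‖x‖ ^ r) ≤ n * s ^ r := by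
      rw [div_le_iff₀ hsr] at hn₀
      refine hn₀.trans ?_
      gcongr
    have h2 : n * s ^ r ≤ n * ‖h‖ ^ r := by gcongr
    have := hB x h
    nlinarith

lemma abs_taylor_remainder_le {f : E → ℝ} {r B K : ℝ}
    (hB : ∀ x h, ‖fderiv ℝ f (x + h) - fderiv ℝ f x‖ ≤ B * (1 + ‖x‖ ^ r) + B * ‖h‖ ^ r)
    (hf : ContDiff ℝ 1 f) (hr : 0 < r) (hK : B ≤ K) (hK0 : 0 ≤ K)
    (x h : E) :
    |f (x + h) - f x - fderiv ℝ f x h| ≤ ‖h‖ * penalizedOsc f r K x + K * ‖h‖ ^ (r + 1) := by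
  have hmv := (convex_closedBall x ‖h‖).norm_image_sub_le_of_norm_fderiv_le' (𝕜 := ℝ) (f := f)
    (φ := fderiv ℝ f x) (C := penalizedOsc f r K x + K * ‖h‖ ^ r)
    (fun z _ => (hf.differentiable one_ne_zero).differentiableAt)
    (fun z hz => ?_) (x := x) (y := x + h) (by simp) (by simp)
  · rw [add_sub_cancel_left, Real.norm_eq_abs] at hmv
    refine hmv.trans_eq ?_
    rw [Real.rpow_add_one' (norm_nonneg _) (by linarith)]
    ring
  · have h1 := norm_fderiv_sub_le_penalizedOsc hB hK x (z - x)
    rw [add_sub_cancel] at h1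
    refine h1.trans ?_
    rw [mem_closedBall_iff_norm] at hz
    gcongr

lemma memLp_norm_rpow_sub_one {E : Type*} [NormedAddCommGroup E] [MeasurableSpace E]
    [BorelSpace E] {p q : ℝ} (hpq : p.HolderConjugate q) {μ : Measure E} [IsFiniteMeasure μ]
    (hmom : Integrable (fun x : E => ‖x‖ ^ p) μ) (B : ℝ) :
    MemLp (fun x : E => B * (1 + ‖x‖ ^ (p - 1))) (ENNReal.ofReal q) μ := by
  have hq := hpq.symm.pos
  have h1 : MemLp (fun x : E => ‖x‖ ^ (p - 1)) (ENNReal.ofReal q) μ := by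
    have hm : AEStronglyMeasurable (fun x : E => ‖x‖ ^ (p - 1)) μ :=
      (measurable_norm.pow_const (p - 1)).aestronglyMeasurable
    rw [← integrable_norm_rpow_iff hm (by simpa) ENNReal.ofReal_ne_top,
      ENNReal.toReal_ofReal hq.le]
    refine hmom.congr (ae_of_all _ fun x => ?_)
    simp only
    rw [Real.norm_of_nonneg (by positivity), ← Real.rpow_mul (norm_nonneg _),
      hpq.sub_one_mul_conj]
  have h0 : MemLp (fun _ : E => (1 : ℝ)) (ENNReal.ofReal q) μ := memLp_const 1
  exact (h0.add h1).const_mul B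

/-- First-order Taylor expansion with a remainder controlled by a small `L^q` function. -/
lemma exists_taylor_bound [MeasurableSpace E] [BorelSpace E] {p q : ℝ}
    (hpq : p.HolderConjugate q) {μ : Measure E} [IsFiniteMeasure μ]
    (hmom : Integrable (fun x : E => ‖x‖ ^ p) μ) {f : E → ℝ} (hf : ContDiff ℝ 1 f) {A : ℝ}
    (hA : ∀ x, ‖fderiv ℝ f x‖ ≤ A * (1 + ‖x‖ ^ (p - 1))) {η : ℝ} (hη : 0 < η) :
    ∃ (Ψ : E → ℝ) (K : ℝ), (∀ x, 0 ≤ Ψ x) ∧ 0 ≤ K ∧ MemLp Ψ (ENNReal.ofReal q) μ ∧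
      (∫ x, Ψ x ^ q ∂μ) ^ (1 / q) ≤ η ∧
      ∀ x h, |f (x + h) - f x - fderiv ℝ f x h| ≤ ‖h‖ * Ψ x + K * ‖h‖ ^ p := by
  obtain ⟨B, hB0, hB⟩ := norm_fderiv_add_sub_le hpq.lt hA
  have hr : 0 < p - 1 := hpq.sub_one_pos
  have hq := hpq.symm.pos
  have hBn : ∀ n : ℕ, B ≤ B + n := fun n => le_add_of_nonneg_right n.cast_nonneg
  have hbd := memLp_norm_rpow_sub_one hpq hmom B
  have hmeas := fun n => measurable_penalizedOsc hB hf (hBn n)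
  have hlim : Tendsto (fun n : ℕ => ∫ x, penalizedOsc f (p - 1) (B + n) x ^ q ∂μ) atTop
      (𝓝 (∫ _, (0 : ℝ) ∂μ)) := by
    refine tendsto_integral_of_dominated_convergence
      (fun x => ‖B * (1 + ‖x‖ ^ (p - 1))‖ ^ q)
      (fun n => ((hmeas n).pow_const q).aestronglyMeasurable) ?_ (fun n => ?_) ?_
    · have := hbd.integrable_norm_rpow (by simpa) ENNReal.ofReal_ne_top
      rwa [ENNReal.toReal_ofReal hq.le] at this
    · refine ae_of_all _ fun x => ?_
      have h0 := penalizedOsc_nonneg hB hr (hBn n) x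
      rw [Real.norm_of_nonneg (by positivity)]
      exact Real.rpow_le_rpow h0 ((penalizedOsc_le hB (hBn n) x).trans (le_abs_self _)) hq.le
    · refine ae_of_all _ fun x => ?_
      have := (tendsto_penalizedOsc hB hf hr x).rpow_const (p := q) (Or.inr hq.le)
      rwa [Real.zero_rpow hq.ne'] at this
  have hlim' := hlim.rpow_const (p := 1 / q) (Or.inr (by positivity))
  rw [integral_zero, Real.zero_rpow (by positivity)] at hlim'
  obtain ⟨n, hn⟩ := (hlim'.eventually_lt_const hη).exists
  have hK0 : 0 ≤ B + n := hB0.trans (hBn n)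
  refine ⟨penalizedOsc f (p - 1) (B + n), B + n, penalizedOsc_nonneg hB hr (hBn n), hK0, ?_, hn.le,
    fun x h => ?_⟩
  · refine hbd.mono (hmeas n).aestronglyMeasurable (ae_of_all _ fun x => ?_)
    rw [Real.norm_of_nonneg (penalizedOsc_nonneg hB hr (hBn n) x)]
    exact (penalizedOsc_le hB (hBn n) x).trans (le_abs_self _)
  · simpa using abs_taylor_remainder_le hB hf hr (hBn n) hK0 x h

end TaylorRemainder

section CouplingExpansion

lemma memLp_ofReal_of_integrable_rpow {α : Type*} [MeasurableSpace α] {π : Measure α} {p : ℝ}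
    (hp : 0 < p) {g : α → ℝ} (hg : AEStronglyMeasurable g π) (hg0 : ∀ x, 0 ≤ g x)
    (hint : Integrable (fun x => g x ^ p) π) : MemLp g (ENNReal.ofReal p) π := by
  rw [← integrable_norm_rpow_iff hg (by simpa) ENNReal.ofReal_ne_top, ENNReal.toReal_ofReal hp.le]
  simpa only [Real.norm_of_nonneg (hg0 _)] using hint

lemma integrable_mul_of_holderConjugate {α : Type*} [MeasurableSpace α] {π : Measure α} {p q : ℝ}
    (hpq : p.HolderConjugate q) {g k : α → ℝ} (hg : MemLp g (ENNReal.ofReal p) π)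
    (hk : MemLp k (ENNReal.ofReal q) π) : Integrable (fun x => g x * k x) π := by
  have := hpq.ennrealOfReal
  exact MemLp.integrable_mul hg hk

lemma memLp_norm_sub {E : Type*} [NormedAddCommGroup E] [MeasurableSpace E] [BorelSpace E]
    [SecondCountableTopology E] {p : ℝ} (hp : 0 < p) {π : Measure (E × E)}
    (hint : Integrable (fun z : E × E => ‖z.2 - z.1‖ ^ p) π) :
    MemLp (fun z : E × E => ‖z.2 - z.1‖) (ENNReal.ofReal p) π :=
  memLp_ofReal_of_integrable_rpow hp
    (Continuous.aestronglyMeasurable (by fun_prop)) (fun _ => norm_nonneg _) hint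

variable {E : Type*} [NormedAddCommGroup E] [NormedSpace ℝ E] [MeasurableSpace E] [BorelSpace E]

lemma integrable_fderiv_sub [SecondCountableTopology E] {p q : ℝ}
    (hpq : p.HolderConjugate q) {μ : Measure E} [IsFiniteMeasure μ]
    (hmom : Integrable (fun x : E => ‖x‖ ^ p) μ) {f : E → ℝ}
    (hf : ContDiff ℝ 1 f) {A : ℝ} (hA : ∀ x, ‖fderiv ℝ f x‖ ≤ A * (1 + ‖x‖ ^ (p - 1)))
    {π : Measure (E × E)} (hπ : π.map Prod.fst = μ)
    (hint : Integrable (fun z : E × E => ‖z.2 - z.1‖ ^ p) π) :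
    Integrable (fun z : E × E => fderiv ℝ f z.1 (z.2 - z.1)) π := by
  have hc : Continuous (fderiv ℝ f) := hf.continuous_fderiv one_ne_zero
  have hpres : MeasurePreserving Prod.fst π μ := ⟨measurable_fst, hπ⟩
  have hL := (memLp_norm_rpow_sub_one hpq hmom A).comp_measurePreserving hpres
  refine (integrable_mul_of_holderConjugate hpq (memLp_norm_sub hpq.pos hint) hL).mono
    (Continuous.aestronglyMeasurable (by fun_prop)) (ae_of_all _ fun z => ?_)
  refine (ContinuousLinearMap.le_opNorm _ _).trans ?_
  rw [mul_comm]
  refine (mul_le_mul_of_nonneg_left (hA _) (norm_nonneg _)).trans (le_abs_self _)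

lemma integrable_of_fderiv_growth {p q : ℝ} (hpq : p.HolderConjugate q) {μ : Measure E}
    [IsFiniteMeasure μ] (hmom : Integrable (fun x : E => ‖x‖ ^ p) μ) {f : E → ℝ}
    (hf : ContDiff ℝ 1 f) {A : ℝ} (hA : ∀ x, ‖fderiv ℝ f x‖ ≤ A * (1 + ‖x‖ ^ (p - 1))) :
    Integrable f μ := by
  obtain ⟨Ψ, K, -, -, -, -, hR⟩ := exists_taylor_bound hpq hmom hf hA one_pos
  have hn : Integrable (fun x : E => ‖x‖) μ := by
    refine (memLp_ofReal_of_integrable_rpow hpq.pos continuous_norm.aestronglyMeasurable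
      (fun _ => norm_nonneg _) hmom).integrable ?_
    exact ENNReal.one_le_ofReal.2 hpq.lt.le
  have hb := ((integrable_const (μ := μ) |f 0|).add (hn.mul_const (‖fderiv ℝ f 0‖ + Ψ 0))).add
    (hmom.const_mul K)
  refine hb.mono' hf.continuous.aestronglyMeasurable (ae_of_all _ fun x => ?_)
  have h1 := hR 0 x
  rw [zero_add] at h1
  have h2 := (fderiv ℝ f 0).le_opNorm x
  rw [Real.norm_eq_abs] at h2
  have h3 : |f x| ≤ |f x - f 0 - fderiv ℝ f 0 x| + |f 0| + |fderiv ℝ f 0 x| := by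
    have : f x = (f x - f 0 - fderiv ℝ f 0 x) + f 0 + fderiv ℝ f 0 x := by ring
    conv_lhs => rw [this]
    exact abs_add_three _ _ _
  simp only [Pi.add_apply, Real.norm_eq_abs]
  linarith

/-- The first-order expansion of `E_π[f(Y)]`, uniform over all couplings with first marginal `μ`. -/
lemma exists_coupling_expansion [SecondCountableTopology E] {p q : ℝ}
    (hpq : p.HolderConjugate q) {μ : Measure E} [IsFiniteMeasure μ]
    (hmom : Integrable (fun x : E => ‖x‖ ^ p) μ) {f : E → ℝ}
    (hf : ContDiff ℝ 1 f) {A : ℝ} (hA : ∀ x, ‖fderiv ℝ f x‖ ≤ A * (1 + ‖x‖ ^ (p - 1)))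
    {η : ℝ} (hη : 0 < η) :
    ∃ M, 0 ≤ M ∧ ∀ π : Measure (E × E), π.map Prod.fst = μ →
      Integrable (fun z : E × E => ‖z.2 - z.1‖ ^ p) π →
      |∫ z, f z.2 ∂π - ∫ x, f x ∂μ - ∫ z, fderiv ℝ f z.1 (z.2 - z.1) ∂π| ≤
        η * (∫ z, ‖z.2 - z.1‖ ^ p ∂π) ^ (1 / p) + M * ∫ z, ‖z.2 - z.1‖ ^ p ∂π := by
  obtain ⟨Ψ, K, hΨ0, hK, hΨ, hΨη, hR⟩ := exists_taylor_bound hpq hmom hf hA hη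
  refine ⟨K, hK, fun π hπ hint => ?_⟩
  have hpres : MeasurePreserving Prod.fst π μ := ⟨measurable_fst, hπ⟩
  have hΨπ : MemLp (fun z : E × E => Ψ z.1) (ENNReal.ofReal q) π :=
    hΨ.comp_measurePreserving hpres
  have hn := memLp_norm_sub hpq.pos hint
  have hi1 := integrable_mul_of_holderConjugate hpq hn hΨπ
  have hi2 := integrable_fderiv_sub hpq hmom hf hA hπ hint
  have hi3 : Integrable (fun z : E × E => f z.1) π :=
    hpres.integrable_comp_of_integrable (integrable_of_fderiv_growth hpq hmom hf hA)
  have hc : Continuous (fderiv ℝ f) := hf.continuous_fderiv one_ne_zero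
  have hcf := hf.continuous
  have hbound : ∀ z : E × E, |f z.2 - f z.1 - fderiv ℝ f z.1 (z.2 - z.1)| ≤
      ‖z.2 - z.1‖ * Ψ z.1 + K * ‖z.2 - z.1‖ ^ p := fun z => by
    simpa using hR z.1 (z.2 - z.1)
  have hib : Integrable (fun z : E × E => ‖z.2 - z.1‖ * Ψ z.1 + K * ‖z.2 - z.1‖ ^ p) π :=
    hi1.add (hint.const_mul K)
  have hiR : Integrable (fun z : E × E => f z.2 - f z.1 - fderiv ℝ f z.1 (z.2 - z.1)) π :=
    hib.mono' (Continuous.aestronglyMeasurable (by fun_prop)) (ae_of_all _ hbound)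
  have hi4 : Integrable (fun z : E × E => f z.2) π := by
    refine ((hiR.add hi2).add hi3).congr (ae_of_all _ fun z => ?_)
    simp only [Pi.add_apply]
    ring
  have hsplit : ∫ z, f z.2 ∂π - ∫ x, f x ∂μ - ∫ z, fderiv ℝ f z.1 (z.2 - z.1) ∂π =
      ∫ z, (f z.2 - f z.1 - fderiv ℝ f z.1 (z.2 - z.1)) ∂π := by
    rw [integral_sub (f := fun z : E × E => f z.2 - f z.1) (hi4.sub hi3) hi2, integral_sub hi4 hi3,
      ← hπ, integral_map measurable_fst.aemeasurable hcf.aestronglyMeasurable]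
  rw [hsplit]
  calc |∫ z, (f z.2 - f z.1 - fderiv ℝ f z.1 (z.2 - z.1)) ∂π|
      ≤ ∫ z, (‖z.2 - z.1‖ * Ψ z.1 + K * ‖z.2 - z.1‖ ^ p) ∂π :=
        norm_integral_le_of_norm_le (f := fun z : E × E => f z.2 - f z.1 -
          fderiv ℝ f z.1 (z.2 - z.1)) hib (ae_of_all _ hbound)
    _ = ∫ z, ‖z.2 - z.1‖ * Ψ z.1 ∂π + K * ∫ z, ‖z.2 - z.1‖ ^ p ∂π := by
        rw [integral_add (f := fun z : E × E => ‖z.2 - z.1‖ * Ψ z.1) hi1 (hint.const_mul K),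
          integral_const_mul]
    _ ≤ η * (∫ z, ‖z.2 - z.1‖ ^ p ∂π) ^ (1 / p) + K * ∫ z, ‖z.2 - z.1‖ ^ p ∂π := by
        gcongr
        refine (integral_mul_le_Lp_mul_Lq_of_nonneg hpq (ae_of_all _ fun _ => norm_nonneg _)
          (ae_of_all _ fun z => hΨ0 z.1) hn hΨπ).trans ?_
        rw [mul_comm]
        have hmap : ∫ z, Ψ z.1 ^ q ∂π = ∫ x, Ψ x ^ q ∂μ := by
          rw [← hπ, integral_map measurable_fst.aemeasurable]
          rw [hπ]
          exact (hΨ.1.aemeasurable.pow_const q).aestronglyMeasurable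
        rw [hmap]
        gcongr

end CouplingExpansion

section PathSpace

variable {N d : ℕ}

/-- The increments `Δh` of a path. -/
def inc (h : PathD N d) : PathD N d := fun i => coord h (i + 1) - coord h i

lemma coord_succ (h : PathD N d) (i : Fin N) : coord h (i + 1) = h i := by
  simp [coord, i.isLt]

lemma inc_sub (x y : PathD N d) : inc (x - y) = inc x - inc y := by
  have hc : ∀ n, coord (x - y) n = coord x n - coord y n := fun n => by
    unfold coord
    split_ifs <;> simp
  funext i
  simp only [inc, hc, Pi.sub_apply]
  abel

lemma sum_inc (h : PathD N d) (k : Fin N) : ∑ i : Fin N, (if i ≤ k then inc h i else 0) = h k := by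
  have h1 : ∑ i : Fin N, (if i ≤ k then inc h i else 0) =
      ∑ n ∈ Finset.range N, if n ≤ k then coord h (n + 1) - coord h n else 0 :=
    (Fin.sum_univ_eq_sum_range (fun n => if n ≤ k then coord h (n + 1) - coord h n else 0) N)
  have h2 : (Finset.range N).filter (fun n => n ≤ (k : ℕ)) = Finset.range (k + 1) := by
    ext n
    simp only [Finset.mem_filter, Finset.mem_range]
    omega
  rw [h1, ← Finset.sum_filter, h2, Finset.sum_range_sub, coord_succ]
  simp [coord]

lemma coord_DeltaInv (y : PathD N d) {n : ℕ} (hn : n ≤ N) :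
    coord (DeltaInv y) n = ∑ m : Fin N, if (m : ℕ) < n then y m else 0 := by
  cases n with
  | zero => simp [coord]
  | succ n =>
    have := coord_succ (DeltaInv y) ⟨n, hn⟩
    simp only at this
    simp only [this, DeltaInv, Nat.lt_succ_iff]

lemma inc_DeltaInv (y : PathD N d) : inc (DeltaInv y) = y := by
  funext i
  rw [inc, coord_DeltaInv y (Nat.succ_le_of_lt i.isLt), coord_DeltaInv y i.isLt.le,
    ← Finset.sum_sub_distrib]
  rw [Finset.sum_eq_single i]
  · simp
  · intro m _ hm
    have : (m : ℕ) ≠ i := fun h => hm (Fin.ext h)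
    rcases lt_or_gt_of_ne this with h | h
    · simp [h, h.trans (Nat.lt_succ_self _)]
    · rw [if_neg (by omega), if_neg (by omega), sub_zero]
  · simp

lemma measurable_inc : Measurable (inc : PathD N d → PathD N d) := by
  refine measurable_pi_lambda _ fun i => ?_
  have hc : ∀ n, Measurable fun h : PathD N d => coord h n := fun n => by
    unfold coord
    split_ifs <;> fun_prop
  exact (hc _).sub (hc _)

lemma lpnorm_rpow {e : ℝ} (he : e ≠ 0) (v : Fin d → ℝ) : lpnorm e v ^ e = ∑ j, |v j| ^ e := by
  rw [lpnorm, ← Real.rpow_mul (Finset.sum_nonneg fun _ _ => by positivity), one_div,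
    inv_mul_cancel₀ he, Real.rpow_one]

lemma abs_le_sum_rpow {ι : Type*} [Fintype ι] {e : ℝ} (he : 0 < e) (v : ι → ℝ) (j : ι) :
    |v j| ≤ (∑ i, |v i| ^ e) ^ (1 / e) := by
  rw [one_div, Real.le_rpow_inv_iff_of_pos (abs_nonneg _)
    (Finset.sum_nonneg fun _ _ => by positivity) he]
  exact Finset.single_le_sum (f := fun i => |v i| ^ e) (fun _ _ => by positivity)
    (Finset.mem_univ j)

lemma sum_Icc_one_eq_sum_fin {M : Type*} [AddCommMonoid M] (F : ℕ → M) (N : ℕ) :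
    ∑ n ∈ Finset.Icc 1 N, F n = ∑ i : Fin N, F (i + 1) := by
  rw [Fin.sum_univ_eq_sum_range (fun n => F (n + 1)), Finset.range_eq_Ico,
    Finset.sum_Ico_add' F 0 N 1]
  rfl

lemma cN_eq_sum_inc {p : ℝ} (hp : p ≠ 0) (x y : PathD N d) :
    cN p x y = ∑ a : Fin N × Fin d, |inc (y - x) a.1 a.2| ^ p := by
  rw [cN, sum_Icc_one_eq_sum_fin, Fintype.sum_prod_type]
  refine Finset.sum_congr rfl fun i _ => ?_
  rw [lpnorm_rpow hp]
  refine Finset.sum_congr rfl fun j _ => ?_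
  rw [inc_sub, ← abs_neg]
  simp [inc]

lemma norm_le_sum_inc {p : ℝ} (hp : 0 < p) (h : PathD N d) :
    ‖h‖ ≤ N * (∑ a : Fin N × Fin d, |inc h a.1 a.2| ^ p) ^ (1 / p) := by
  have h0 : 0 ≤ (N : ℝ) * (∑ a : Fin N × Fin d, |inc h a.1 a.2| ^ p) ^ (1 / p) := by positivity
  refine (pi_norm_le_iff_of_nonneg h0).2 fun k => (pi_norm_le_iff_of_nonneg h0).2 fun j => ?_
  rw [← sum_inc h k, Finset.sum_apply, Real.norm_eq_abs]
  refine (Finset.abs_sum_le_sum_abs _ _).trans ?_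
  refine (Finset.sum_le_card_nsmul _ _
    ((∑ a : Fin N × Fin d, |inc h a.1 a.2| ^ p) ^ (1 / p)) fun i _ => ?_).trans_eq (by simp)
  split_ifs
  · exact abs_le_sum_rpow hp (fun a : Fin N × Fin d => inc h a.1 a.2) (i, j)
  · simp only [Pi.zero_apply, abs_zero]
    positivity

lemma norm_rpow_le_cN {p : ℝ} (hp : 0 < p) (x y : PathD N d) :
    ‖y - x‖ ^ p ≤ (N : ℝ) ^ p * cN p x y := by
  rw [cN_eq_sum_inc hp.ne']
  have h0 : 0 ≤ ∑ a : Fin N × Fin d, |inc (y - x) a.1 a.2| ^ p :=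
    Finset.sum_nonneg fun _ _ => by positivity
  refine (Real.rpow_le_rpow (norm_nonneg _) (norm_le_sum_inc hp _) hp.le).trans_eq ?_
  rw [Real.mul_rpow (by positivity) (by positivity), ← Real.rpow_mul h0, one_div,
    inv_mul_cancel₀ hp.ne', Real.rpow_one]

lemma cN_nonneg {p : ℝ} (hp : p ≠ 0) (x y : PathD N d) : 0 ≤ cN p x y := by
  rw [cN_eq_sum_inc hp]
  exact Finset.sum_nonneg fun _ _ => by positivity

lemma abs_inc_le (h : PathD N d) (i : Fin N) (j : Fin d) : |inc h i j| ≤ 2 * ‖h‖ := by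
  have hc : ∀ n, |coord h n j| ≤ ‖h‖ := fun n => by
    unfold coord
    split_ifs
    · exact (norm_le_pi_norm _ j).trans (norm_le_pi_norm h _)
    · simp
  have := abs_sub (coord h (i + 1) j) (coord h i j)
  simp only [inc, Pi.sub_apply]
  linarith [hc (i + 1), hc i]

/-- Abel summation: the derivative in terms of the pathwise Malliavin derivative. -/
lemma fderiv_apply_eq_sum (f : PathD N d → ℝ) (x h : PathD N d) :
    fderiv ℝ f x h = ∑ a : Fin N × Fin d, Dn f (a.1 + 1) x a.2 * inc h a.1 a.2 := by
  have hh : h = ∑ k, ∑ j, h k j • (Pi.single k (Pi.single j 1) : PathD N d) := by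
    funext k j
    simp [Finset.sum_apply, Pi.single_apply, ite_apply]
  conv_lhs => rw [hh]
  simp only [map_sum, map_smul, smul_eq_mul]
  rw [Fintype.sum_prod_type, Finset.sum_comm]
  conv_rhs => rw [Finset.sum_comm]
  refine Finset.sum_congr rfl fun j _ => ?_
  simp only [Dn, Finset.sum_mul]
  rw [Finset.sum_comm]
  refine Finset.sum_congr rfl fun k _ => ?_
  rw [← sum_inc h k, Finset.sum_apply, Finset.sum_mul]
  refine Finset.sum_congr rfl fun i _ => ?_
  simp only [Fin.le_def, add_le_add_iff_right]
  split_ifs <;> simp [mul_comm]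

lemma norm_fderiv_le_of_Dn {p q C : ℝ} (hq : 0 < q) {f : PathD N d → ℝ}
    (hgrow : ∀ n : ℕ, ∀ x : PathD N d, lpnorm q (Dn f n x) ≤ C * (1 + ‖x‖ ^ (p - 1)))
    (x : PathD N d) :
    ‖fderiv ℝ f x‖ ≤ Fintype.card (Fin N × Fin d) * (|C| * 2) * (1 + ‖x‖ ^ (p - 1)) := by
  refine ContinuousLinearMap.opNorm_le_bound _ (by positivity) fun h => ?_
  rw [fderiv_apply_eq_sum, Real.norm_eq_abs]
  refine (Finset.abs_sum_le_sum_abs _ _).trans ?_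
  refine (Finset.sum_le_card_nsmul _ _ (|C| * (1 + ‖x‖ ^ (p - 1)) * (2 * ‖h‖))
    fun a _ => ?_).trans_eq ?_
  · rw [abs_mul]
    have h1 := (abs_le_sum_rpow hq (Dn f (a.1 + 1) x) a.2).trans (hgrow (a.1 + 1) x)
    gcongr
    · exact h1.trans (by gcongr; exact le_abs_self C)
    · exact abs_inc_le h a.1 a.2
  · rw [nsmul_eq_mul, Finset.card_univ]
    ring

lemma continuous_Dn {f : PathD N d → ℝ} (hf : ContDiff ℝ 1 f) (n : ℕ) : Continuous (Dn f n) := by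
  have hc : Continuous (fderiv ℝ f) := hf.continuous_fderiv one_ne_zero
  refine continuous_pi fun j => continuous_finsetSum _ fun k _ => ?_
  split_ifs <;> fun_prop

end PathSpace

section Causality

variable {N d : ℕ}

lemma Fn_le (N d n : ℕ) : Fn N d n ≤ (inferInstance : MeasurableSpace (PathD N d)) := by
  refine Measurable.comap_le (measurable_pi_lambda _ fun i => ?_)
  split_ifs <;> fun_prop

lemma measurable_eval_Fn {n : ℕ} {i : Fin N} (hi : (i : ℕ) + 1 ≤ n) :
    Measurable[Fn N d n] (fun x : PathD N d => x i) := by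
  have h := (measurable_pi_apply i).comp
    (comap_measurable (fun x : PathD N d => fun i : Fin N => if (i : ℕ) + 1 ≤ n then x i else 0))
  simp only [Function.comp_def, if_pos hi] at h
  exact h

lemma measurable_to_Fn {Ω : Type*} {m : MeasurableSpace Ω} {n : ℕ} {Z : Ω → PathD N d}
    (hZ : ∀ i : Fin N, (i : ℕ) + 1 ≤ n → Measurable fun ω => Z ω i) :
    Measurable[m, Fn N d n] Z := by
  refine measurable_comap_iff.2 (measurable_pi_lambda _ fun i => ?_)
  by_cases hi : (i : ℕ) + 1 ≤ n
  · simpa only [Function.comp_def, if_pos hi] using hZ i hi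
  · simpa only [Function.comp_def, if_neg hi] using measurable_const

lemma Fn_mono {n m : ℕ} (h : n ≤ m) : Fn N d n ≤ Fn N d m := by
  have : Measurable[Fn N d m, Fn N d n] (id : PathD N d → PathD N d) :=
    measurable_to_Fn fun i hi => measurable_eval_Fn (hi.trans h)
  simpa only [MeasurableSpace.comap_id] using this.comap_le

lemma Fn_last (N d : ℕ) : Fn N d N = (inferInstance : MeasurableSpace (PathD N d)) := by
  refine le_antisymm (Fn_le N d N) ?_
  have : Measurable[Fn N d N] (id : PathD N d → PathD N d) :=
    @measurable_pi_lambda _ _ _ (Fn N d N) _ _ fun i => measurable_eval_Fn i.isLt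
  simpa only [MeasurableSpace.comap_id] using this.comap_le

lemma measurable_inc_Fn (i : Fin N) (j : Fin d) :
    Measurable[Fn N d (i + 1)] (fun x : PathD N d => inc x i j) := by
  have hc : ∀ n ≤ (i : ℕ) + 1, Measurable[Fn N d (i + 1)] fun x : PathD N d => coord x n j := by
    intro n hn
    unfold coord
    split_ifs with h
    · exact (measurable_pi_apply j).comp (measurable_eval_Fn (by simp only; omega))
    · exact measurable_const
  exact (hc _ le_rfl).sub (hc _ (Nat.le_succ _))

lemma integral_mul_condExp {Ω : Type*} {m mΩ : MeasurableSpace Ω} {π : Measure Ω}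
    [IsProbabilityMeasure π] (hm : m ≤ mΩ) {g φ : Ω → ℝ} (hg : Integrable g π)
    (hφ : StronglyMeasurable[m] φ) (hgφ : Integrable (fun ω => g ω * φ ω) π) :
    ∫ ω, g ω * φ ω ∂π = ∫ ω, (π[g | m]) ω * φ ω ∂π := by
  have h := condExp_mul_of_stronglyMeasurable_right (μ := π) hφ hgφ hg
  rw [← integral_condExp hm]
  exact integral_congr_ae h

/-- If `m₁` and `m₂` are conditionally independent given `m ≤ m₂`, then an integrable
`m₂`-measurable function may be replaced by its conditional expectation given `m` when it is
integrated against an `m₁`-measurable function. -/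
lemma CondIndepOn.integral_mul {Ω : Type*} {m m₁ m₂ mΩ : MeasurableSpace Ω} {π : Measure Ω}
    [IsProbabilityMeasure π] (h : CondIndepOn π m m₁ m₂) (hm : m ≤ m₂) (hm₁ : m₁ ≤ mΩ)
    (hm₂ : m₂ ≤ mΩ) {g φ : Ω → ℝ} (hg : Integrable g π) (hgm : StronglyMeasurable[m₂] g)
    (hφ : StronglyMeasurable[m₁] φ) (hgφ : Integrable (fun ω => g ω * φ ω) π)
    (hgφ' : Integrable (fun ω => (π[g | m]) ω * φ ω) π) :
    ∫ ω, g ω * φ ω ∂π = ∫ ω, (π[g | m]) ω * φ ω ∂π := by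
  have hmΩ := hm.trans hm₂
  have hset : ∀ A, MeasurableSet[m₁] A → ∫ ω in A, g ω ∂π = ∫ ω in A, (π[g | m]) ω ∂π := by
    intro A hA
    have hAΩ := hm₁ A hA
    set a : Ω → ℝ := A.indicator fun _ => 1 with ha
    have hai : Integrable a π := (integrable_const 1).indicator hAΩ
    have ha1 : ∀ ω, ‖a ω‖ ≤ 1 := fun ω => by
      by_cases hω : ω ∈ A <;> simp [ha, hω]
    have hu : π[a | m] =ᵐ[π] π[a | m₂] := by
      refine ae_eq_condExp_of_forall_setIntegral_eq hm₂ hai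
        (fun _ _ _ => integrable_condExp.integrableOn) (fun B hB _ => ?_)
        (stronglyMeasurable_condExp.mono hm).aestronglyMeasurable
      have hBΩ := hm₂ B hB
      set b : Ω → ℝ := B.indicator fun _ => 1 with hb
      have hbi : Integrable b π := (integrable_const 1).indicator hBΩ
      have hmulset : ∀ k : Ω → ℝ, ∫ ω in B, k ω ∂π = ∫ ω, b ω * k ω ∂π := fun k => by
        rw [← integral_indicator hBΩ]
        refine integral_congr_ae (ae_of_all _ fun ω => ?_)
        by_cases hω : ω ∈ B <;> simp [hb, hω]
      have hbk : ∀ k : Ω → ℝ, Integrable k π → Integrable (fun ω => b ω * k ω) π := fun k hk => by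
        refine hk.bdd_mul (c := 1) hbi.1 (ae_of_all _ fun ω => ?_)
        by_cases hω : ω ∈ B <;> simp [hb, hω]
      rw [hmulset, hmulset, integral_mul_condExp hmΩ hbi stronglyMeasurable_condExp
        (hbk _ integrable_condExp)]
      have hab : (fun ω => b ω * a ω) = (A ∩ B).indicator fun _ => (1 : ℝ) := by
        funext ω
        by_cases h1 : ω ∈ A <;> by_cases h2 : ω ∈ B <;> simp [ha, hb, h1, h2]
      rw [hab, ← integral_condExp hmΩ (f := (A ∩ B).indicator fun _ => (1 : ℝ))]
      refine integral_congr_ae ?_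
      filter_upwards [h A B hA hB] with ω hω
      rw [hω, Pi.mul_apply, mul_comm]
    have hmulset : ∀ k : Ω → ℝ, ∫ ω in A, k ω ∂π = ∫ ω, a ω * k ω ∂π := fun k => by
      rw [← integral_indicator hAΩ]
      refine integral_congr_ae (ae_of_all _ fun ω => ?_)
      by_cases hω : ω ∈ A <;> simp [ha, hω]
    have hak : ∀ k : Ω → ℝ, Integrable k π → Integrable (fun ω => a ω * k ω) π := fun k hk =>
      hk.bdd_mul (c := 1) hai.1 (ae_of_all _ ha1)
    have hu1 : ∀ᵐ ω ∂π, ‖(π[a | m]) ω‖ ≤ 1 := by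
      have h0 : 0 ≤ᵐ[π] π[a | m] := condExp_nonneg (ae_of_all _ fun ω => by
        by_cases hω : ω ∈ A <;> simp [ha, hω])
      have h1 : π[a | m] ≤ᵐ[π] π[fun _ => (1 : ℝ) | m] :=
        condExp_mono hai (integrable_const _) (ae_of_all _ fun ω => by
          by_cases hω : ω ∈ A <;> simp [ha, hω])
      rw [condExp_const hmΩ] at h1
      filter_upwards [h0, h1] with ω h0 h1
      rw [Real.norm_of_nonneg h0]
      exact h1
    calc ∫ ω in A, g ω ∂π = ∫ ω, a ω * g ω ∂π := hmulset g
      _ = ∫ ω, (π[a | m₂]) ω * g ω ∂π := integral_mul_condExp hm₂ hai hgm (hak g hg)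
      _ = ∫ ω, g ω * (π[a | m]) ω ∂π := by
        refine integral_congr_ae ?_
        filter_upwards [hu] with ω hω
        rw [hω, mul_comm]
      _ = ∫ ω, (π[g | m]) ω * (π[a | m]) ω ∂π :=
        integral_mul_condExp hmΩ hg stronglyMeasurable_condExp
          (hg.mul_bdd (c := 1) integrable_condExp.1 hu1)
      _ = ∫ ω, (π[a | m]) ω * (π[g | m]) ω ∂π := by simp only [mul_comm]
      _ = ∫ ω, a ω * (π[g | m]) ω ∂π :=
        (integral_mul_condExp hmΩ hai stronglyMeasurable_condExp (hak _ integrable_condExp)).symm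
      _ = ∫ ω in A, (π[g | m]) ω ∂π := (hmulset _).symm
  have hce : π[g | m₁] =ᵐ[π] π[π[g | m] | m₁] := by
    refine ae_eq_condExp_of_forall_setIntegral_eq hm₁ integrable_condExp
      (fun _ _ _ => integrable_condExp.integrableOn) (fun A hA _ => ?_)
      stronglyMeasurable_condExp.aestronglyMeasurable
    rw [setIntegral_condExp hm₁ hg hA, hset A hA]
  rw [integral_mul_condExp hm₁ hg hφ hgφ, integral_mul_condExp hm₁ integrable_condExp hφ hgφ']
  refine integral_congr_ae ?_
  filter_upwards [hce] with ω hω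
  rw [hω]

/-- Conditional expectations are compatible with pulling back along a measure-preserving map. -/
lemma condExp_comp_measurePreserving {Ω X : Type*} {m mX : MeasurableSpace X} [MeasurableSpace Ω]
    {π : Measure Ω} [IsProbabilityMeasure π] {μ : Measure X} [IsProbabilityMeasure μ] {T : Ω → X}
    (hT : MeasurePreserving T π μ) (hm : m ≤ mX) {g : X → ℝ}
    (hg : Integrable g μ) :
    (fun ω => (μ[g | m]) (T ω)) =ᵐ[π] π[fun ω => g (T ω) | m.comap T] := by
  have hle : m.comap T ≤ (inferInstance : MeasurableSpace Ω) :=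
    (MeasurableSpace.comap_mono hm).trans hT.measurable.comap_le
  refine ae_eq_condExp_of_forall_setIntegral_eq hle (hT.integrable_comp_of_integrable hg)
    (fun _ _ _ => (hT.integrable_comp_of_integrable integrable_condExp).integrableOn) ?_ ?_
  · rintro _ ⟨B, hB, rfl⟩ _
    have hset : ∀ k : X → ℝ, Integrable k μ →
        ∫ ω in T ⁻¹' B, k (T ω) ∂π = ∫ x in B, k x ∂μ := fun k hk => by
      rw [← hT.map_eq] at hk ⊢
      exact (setIntegral_map (hm B hB) hk.1 hT.measurable.aemeasurable).symm
    rw [hset _ integrable_condExp, hset _ hg, setIntegral_condExp hm hg hB]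
  · exact (stronglyMeasurable_condExp.comp_measurable
      (comap_measurable (m := m) T)).aestronglyMeasurable

end Causality

section OptionalProjection

variable {N d : ℕ}

/-- The coordinates of the optional projection of the pathwise Malliavin derivative, indexed by
time and space. -/
noncomputable def optProj (μ : Measure (PathD N d)) (f : PathD N d → ℝ) (a : Fin N × Fin d)
    (x : PathD N d) : ℝ :=
  (μ[Dn f (a.1 + 1) | Fn N d (a.1 + 1)]) x a.2

lemma measurable_optProj (μ : Measure (PathD N d)) (f : PathD N d → ℝ) (a : Fin N × Fin d) :
    Measurable[Fn N d (a.1 + 1)] (optProj μ f a) :=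
  (measurable_pi_apply a.2).comp stronglyMeasurable_condExp.measurable

lemma memLp_Dn {p q C : ℝ} (hpq : p.HolderConjugate q) {μ : Measure (PathD N d)}
    [IsFiniteMeasure μ] (hmom : Integrable (fun x : PathD N d => ‖x‖ ^ p) μ)
    {f : PathD N d → ℝ} (hf : ContDiff ℝ 1 f)
    (hgrow : ∀ n : ℕ, ∀ x : PathD N d, lpnorm q (Dn f n x) ≤ C * (1 + ‖x‖ ^ (p - 1))) (n : ℕ) :
    MemLp (Dn f n) (ENNReal.ofReal q) μ := by
  refine (memLp_norm_rpow_sub_one hpq hmom |C|).mono (continuous_Dn hf n).aestronglyMeasurable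
    (ae_of_all _ fun x => ?_)
  rw [Real.norm_of_nonneg (by positivity)]
  refine (pi_norm_le_iff_of_nonneg (by positivity)).2 fun j => ?_
  refine (abs_le_sum_rpow hpq.symm.pos (Dn f n x) j).trans ((hgrow n x).trans ?_)
  gcongr
  exact le_abs_self C

lemma optProj_ae_eq {μ : Measure (PathD N d)} {f : PathD N d → ℝ} (a : Fin N × Fin d)
    (hint : Integrable (Dn f (a.1 + 1)) μ) :
    optProj μ f a =ᵐ[μ] μ[fun x => Dn f (a.1 + 1) x a.2 | Fn N d (a.1 + 1)] :=
  (ContinuousLinearMap.proj (R := ℝ) (φ := fun _ : Fin d => ℝ) a.2).comp_condExp_comm hint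

lemma memLp_eval {α : Type*} [MeasurableSpace α] {μ : Measure α} {p : ℝ≥0∞} {g : α → Fin d → ℝ}
    (hg : MemLp g p μ) (j : Fin d) : MemLp (fun x => g x j) p μ :=
  (ContinuousLinearMap.proj (R := ℝ) (φ := fun _ : Fin d => ℝ) j).comp_memLp' hg

lemma memLp_optProj {p q C : ℝ} (hpq : p.HolderConjugate q) {μ : Measure (PathD N d)}
    [IsProbabilityMeasure μ] (hmom : Integrable (fun x : PathD N d => ‖x‖ ^ p) μ)
    {f : PathD N d → ℝ} (hf : ContDiff ℝ 1 f)
    (hgrow : ∀ n : ℕ, ∀ x : PathD N d, lpnorm q (Dn f n x) ≤ C * (1 + ‖x‖ ^ (p - 1)))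
    (a : Fin N × Fin d) : MemLp (optProj μ f a) (ENNReal.ofReal q) μ := by
  have h1q : 1 ≤ ENNReal.ofReal q := ENNReal.one_le_ofReal.2 hpq.symm.lt.le
  have hD := memLp_Dn hpq hmom hf hgrow (a.1 + 1)
  exact (memLp_congr_ae (optProj_ae_eq a (hD.integrable h1q))).2 ((memLp_eval hD a.2).condExp h1q)

lemma integrable_abs_rpow {α : Type*} [MeasurableSpace α] {μ : Measure α} {q : ℝ} (hq : 0 < q)
    {g : α → ℝ} (hg : MemLp g (ENNReal.ofReal q) μ) : Integrable (fun x => |g x| ^ q) μ := by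
  have := hg.integrable_norm_rpow (by simpa) ENNReal.ofReal_ne_top
  rwa [ENNReal.toReal_ofReal hq.le] at this

lemma optionalNorm_eq {q : ℝ} (hq : 0 < q) {μ : Measure (PathD N d)} {f : PathD N d → ℝ}
    (hW : ∀ a, MemLp (optProj μ f a) (ENNReal.ofReal q) μ) :
    optionalNorm q μ f = (∑ a, ∫ x, |optProj μ f a x| ^ q ∂μ) ^ (1 / q) := by
  rw [optionalNorm, sum_Icc_one_eq_sum_fin, Fintype.sum_prod_type]
  congr 1
  refine Finset.sum_congr rfl fun i _ => ?_
  rw [← integral_finsetSum _ fun j _ => integrable_abs_rpow hq (hW (i, j))]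
  refine integral_congr_ae (ae_of_all _ fun x => ?_)
  exact lpnorm_rpow hq.ne' _

section UpperBound

variable {p q C : ℝ} {μ : Measure (PathD N d)} {f : PathD N d → ℝ}
  {π : Measure (PathD N d × PathD N d)}

lemma measurable_inc_sub (a : Fin N × Fin d) :
    Measurable fun z : PathD N d × PathD N d => inc (z.2 - z.1) a.1 a.2 :=
  (measurable_pi_apply a.2).comp ((measurable_pi_apply a.1).comp
    (measurable_inc.comp (measurable_snd.sub measurable_fst)))

lemma memLp_inc_sub (hp : 0 < p) (hint : Integrable (fun z => cN p z.1 z.2) π)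
    (a : Fin N × Fin d) :
    MemLp (fun z : PathD N d × PathD N d => inc (z.2 - z.1) a.1 a.2) (ENNReal.ofReal p) π := by
  have hm := measurable_inc_sub a
  refine (memLp_norm_iff hm.aestronglyMeasurable).1 ?_
  refine memLp_ofReal_of_integrable_rpow hp hm.norm.aestronglyMeasurable
    (fun _ => norm_nonneg _) ?_
  refine hint.mono' (hm.norm.pow_const p).aestronglyMeasurable (ae_of_all _ fun z => ?_)
  rw [Real.norm_of_nonneg (by positivity), cN_eq_sum_inc hp.ne']
  exact Finset.single_le_sum
    (f := fun a : Fin N × Fin d => |inc (z.2 - z.1) a.1 a.2| ^ p)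
    (fun _ _ => by positivity) (Finset.mem_univ a)

lemma memLp_inc [IsFiniteMeasure μ] (hp : 0 < p)
    (hmom : Integrable (fun x : PathD N d => ‖x‖ ^ p) μ) (a : Fin N × Fin d) :
    MemLp (fun x : PathD N d => inc x a.1 a.2) (ENNReal.ofReal p) μ := by
  have hn : MemLp (fun x : PathD N d => 2 * ‖x‖) (ENNReal.ofReal p) μ :=
    (memLp_ofReal_of_integrable_rpow hp continuous_norm.aestronglyMeasurable
      (fun _ => norm_nonneg _) hmom).const_mul 2
  have hm : Measurable fun x : PathD N d => inc x a.1 a.2 :=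
    (measurable_inc_Fn a.1 a.2).mono (Fn_le N d _) le_rfl
  refine hn.mono hm.aestronglyMeasurable (ae_of_all _ fun x => ?_)
  exact (abs_inc_le x a.1 a.2).trans (le_abs_self _)

/-- Under a causal coupling the Malliavin derivative may be replaced by its optional projection
when integrated against the increments of `Y - X`. -/
lemma integral_Dn_mul_inc_sub (hpq : p.HolderConjugate q) [IsProbabilityMeasure μ]
    (hmom : Integrable (fun x : PathD N d => ‖x‖ ^ p) μ) (hf : ContDiff ℝ 1 f)
    (hgrow : ∀ n : ℕ, ∀ x : PathD N d, lpnorm q (Dn f n x) ≤ C * (1 + ‖x‖ ^ (p - 1)))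
    [IsProbabilityMeasure π] (hπ : IsCausalStar μ π) (hint : Integrable (fun z => cN p z.1 z.2) π)
    (a : Fin N × Fin d) :
    ∫ z, Dn f (a.1 + 1) z.1 a.2 * inc (z.2 - z.1) a.1 a.2 ∂π =
      ∫ z, optProj μ f a z.1 * inc (z.2 - z.1) a.1 a.2 ∂π := by
  have hpres : MeasurePreserving Prod.fst π μ := ⟨measurable_fst, hπ.1⟩
  have h1q : 1 ≤ ENNReal.ofReal q := ENNReal.one_le_ofReal.2 hpq.symm.lt.le
  have hD := memLp_eval (memLp_Dn hpq hmom hf hgrow (a.1 + 1)) a.2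
  have hDi := hD.integrable h1q
  have hDπ : MemLp (fun z : PathD N d × PathD N d => Dn f (a.1 + 1) z.1 a.2)
    (ENNReal.ofReal q) π := hD.comp_measurePreserving hpres
  have hWπ : MemLp (fun z : PathD N d × PathD N d => optProj μ f a z.1)
    (ENNReal.ofReal q) π := (memLp_optProj hpq hmom hf hgrow a).comp_measurePreserving hpres
  have hI1 : MemLp (fun z : PathD N d × PathD N d => inc z.1 a.1 a.2) (ENNReal.ofReal p) π :=
    (memLp_inc hpq.pos hmom a).comp_measurePreserving hpres
  have hI2 : MemLp (fun z : PathD N d × PathD N d => inc z.2 a.1 a.2) (ENNReal.ofReal p) π := by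
    convert (memLp_inc_sub hpq.pos hint a).add hI1 using 1
    funext z
    simp [inc_sub]
  have hprod : ∀ {g k : PathD N d × PathD N d → ℝ}, MemLp g (ENNReal.ofReal q) π →
      MemLp k (ENNReal.ofReal p) π → Integrable (fun z => g z * k z) π :=
    fun hg hk => integrable_mul_of_holderConjugate hpq.symm hg hk
  have hce : (fun z : PathD N d × PathD N d => optProj μ f a z.1) =ᵐ[π]
      π[fun z : PathD N d × PathD N d => Dn f (a.1 + 1) z.1 a.2 |
        (Fn N d (a.1 + 1)).comap Prod.fst] :=
    (hpres.quasiMeasurePreserving.ae_eq_comp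
      (optProj_ae_eq a ((memLp_Dn hpq hmom hf hgrow (a.1 + 1)).integrable h1q))).trans
      (condExp_comp_measurePreserving hpres (Fn_le N d _) hDi)
  have hle1 : ∀ n, (Fn N d n).comap Prod.fst ≤
      (inferInstance : MeasurableSpace (PathD N d × PathD N d)) := by
    rintro n _ ⟨B, hB, rfl⟩
    exact measurable_fst (Fn_le N d n B hB)
  have hle2 : (Fn N d (a.1 + 1)).comap Prod.snd ≤
      (inferInstance : MeasurableSpace (PathD N d × PathD N d)) := by
    rintro _ ⟨B, hB, rfl⟩
    exact measurable_snd (Fn_le N d _ B hB)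
  have hceI : ∀ {k : PathD N d × PathD N d → ℝ},
      (fun z => optProj μ f a z.1 * k z) =ᵐ[π]
        fun z => (π[fun z : PathD N d × PathD N d => Dn f (a.1 + 1) z.1 a.2 |
          (Fn N d (a.1 + 1)).comap Prod.fst]) z * k z :=
    fun {k} => hce.mono fun z hz => by simp only [hz]
  have e1 : ∫ z, Dn f (a.1 + 1) z.1 a.2 * inc z.1 a.1 a.2 ∂π =
      ∫ z, optProj μ f a z.1 * inc z.1 a.1 a.2 ∂π := by
    rw [integral_congr_ae hceI]
    exact integral_mul_condExp (hle1 _) (hDπ.integrable h1q)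
      ((measurable_inc_Fn a.1 a.2).comp (comap_measurable Prod.fst)).stronglyMeasurable
      (hprod hDπ hI1)
  have e2 : ∫ z, Dn f (a.1 + 1) z.1 a.2 * inc z.2 a.1 a.2 ∂π =
      ∫ z, optProj μ f a z.1 * inc z.2 a.1 a.2 ∂π := by
    rw [integral_congr_ae hceI]
    refine (hπ.2 (a.1 + 1)).integral_mul (MeasurableSpace.comap_mono (Fn_mono a.1.isLt)) hle2
      (hle1 N) (hDπ.integrable h1q) ?_
      ((measurable_inc_Fn a.1 a.2).comp (comap_measurable Prod.snd)).stronglyMeasurable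
      (hprod hDπ hI2) ((hprod hWπ hI2).congr hceI)
    have hc : Measurable[Fn N d N] fun x => Dn f (a.1 + 1) x a.2 := by
      rw [Fn_last]
      exact (measurable_pi_apply a.2).comp (continuous_Dn hf _).measurable
    exact (hc.comp (comap_measurable Prod.fst)).stronglyMeasurable
  simp only [inc_sub, Pi.sub_apply, mul_sub]
  rw [integral_sub (hprod hDπ hI2) (hprod hDπ hI1), integral_sub (hprod hWπ hI2) (hprod hWπ hI1),
    e1, e2]

lemma integral_sum_mul_le {Ω ι : Type*} [MeasurableSpace Ω] [Fintype ι] {π : Measure Ω}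
    (hpq : p.HolderConjugate q) {g k : ι → Ω → ℝ} (hg : ∀ a, MemLp (g a) (ENNReal.ofReal q) π)
    (hk : ∀ a, MemLp (k a) (ENNReal.ofReal p) π) :
    ∑ a, ∫ z, g a z * k a z ∂π ≤
      (∑ a, ∫ z, |g a z| ^ q ∂π) ^ (1 / q) * (∫ z, ∑ a, |k a z| ^ p ∂π) ^ (1 / p) := by
  have hq := hpq.symm.pos
  have key : ∀ {e : ℝ} (_ : 0 < e) {g : ι → Ω → ℝ}, (∀ a, MemLp (g a) (ENNReal.ofReal e) π) →
      MemLp (fun z => (∑ a, |g a z| ^ e) ^ (1 / e)) (ENNReal.ofReal e) π ∧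
        ∀ z, ((∑ a, |g a z| ^ e) ^ (1 / e)) ^ e = ∑ a, |g a z| ^ e := by
    intro e he g hg
    have hz : ∀ z, ((∑ a, |g a z| ^ e) ^ (1 / e)) ^ e = ∑ a, |g a z| ^ e := fun z => by
      rw [← Real.rpow_mul (Finset.sum_nonneg fun _ _ => by positivity), one_div,
        inv_mul_cancel₀ he.ne', Real.rpow_one]
    have hi : Integrable (fun z => ∑ a, |g a z| ^ e) π :=
      integrable_finsetSum _ fun a _ => integrable_abs_rpow he (hg a)
    refine ⟨memLp_ofReal_of_integrable_rpow he
      (hi.1.aemeasurable.pow_const _).aestronglyMeasurable (fun z => by positivity) ?_, hz⟩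
    simpa only [hz] using hi
  obtain ⟨hG, hGz⟩ := key hq hg
  obtain ⟨hK, hKz⟩ := key hpq.pos hk
  rw [← integral_finsetSum _ fun a _ =>
    integrable_mul_of_holderConjugate hpq.symm (hg a) (hk a)]
  calc ∫ z, ∑ a, g a z * k a z ∂π
      ≤ ∫ z, (∑ a, |g a z| ^ q) ^ (1 / q) * (∑ a, |k a z| ^ p) ^ (1 / p) ∂π := by
        refine integral_mono (integrable_finsetSum _ fun a _ =>
          integrable_mul_of_holderConjugate hpq.symm (hg a) (hk a))
          (integrable_mul_of_holderConjugate hpq.symm hG hK) fun z => ?_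
        exact Real.inner_le_Lp_mul_Lq _ _ _ hpq.symm
    _ ≤ _ := integral_mul_le_Lp_mul_Lq_of_nonneg hpq.symm (ae_of_all _ fun z => by positivity)
        (ae_of_all _ fun z => by positivity) hG hK
    _ = _ := by
        simp only [hGz, hKz]
        rw [integral_finsetSum _ fun a _ => integrable_abs_rpow hq (hg a)]

lemma integral_fderiv_le_of_isCausalStar (hpq : p.HolderConjugate q) [IsProbabilityMeasure μ]
    (hmom : Integrable (fun x : PathD N d => ‖x‖ ^ p) μ) (hf : ContDiff ℝ 1 f)
    (hgrow : ∀ n : ℕ, ∀ x : PathD N d, lpnorm q (Dn f n x) ≤ C * (1 + ‖x‖ ^ (p - 1)))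
    [IsProbabilityMeasure π] (hπ : IsCausalStar μ π)
    (hint : Integrable (fun z => cN p z.1 z.2) π) :
    ∫ z, fderiv ℝ f z.1 (z.2 - z.1) ∂π ≤ optionalNorm q μ f * costD p π ^ (1 / p) := by
  have hpres : MeasurePreserving Prod.fst π μ := ⟨measurable_fst, hπ.1⟩
  have hW := memLp_optProj hpq hmom hf hgrow
  have hI := memLp_inc_sub hpq.pos hint
  have hDπ : ∀ a : Fin N × Fin d, MemLp (fun z : PathD N d × PathD N d =>
      Dn f (a.1 + 1) z.1 a.2) (ENNReal.ofReal q) π := fun a =>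
    (memLp_eval (memLp_Dn hpq hmom hf hgrow (a.1 + 1)) a.2).comp_measurePreserving hpres
  simp only [fderiv_apply_eq_sum]
  rw [integral_finsetSum _ fun a _ =>
    integrable_mul_of_holderConjugate hpq.symm (hDπ a) (hI a)]
  simp only [integral_Dn_mul_inc_sub hpq hmom hf hgrow hπ hint]
  refine (integral_sum_mul_le hpq (g := fun a (z : PathD N d × PathD N d) => optProj μ f a z.1)
    (fun a => (hW a).comp_measurePreserving hpres) hI).trans_eq ?_
  rw [optionalNorm_eq hpq.symm.pos hW, costD]
  simp only [cN_eq_sum_inc hpq.ne_zero]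
  congr 2
  refine Finset.sum_congr rfl fun a _ => ?_
  have hm : AEStronglyMeasurable (fun x => |optProj μ f a x| ^ q) (π.map Prod.fst) := by
    rw [hπ.1]
    exact (integrable_abs_rpow hpq.symm.pos (hW a)).1
  conv_rhs => rw [← hπ.1]
  rw [integral_map measurable_fst.aemeasurable]
  · rw [hπ.1]
  · rw [hπ.1] at hm ⊢
    exact hm

end UpperBound

end OptionalProjection

section LowerBound

variable {N d : ℕ} {p q C : ℝ} {μ : Measure (PathD N d)} {f : PathD N d → ℝ}

lemma condExp_congr_indicator {Ω : Type*} {m mΩ : MeasurableSpace Ω} {π : Measure Ω}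
    {A A' : Set Ω} (h : A =ᵐ[π] A') :
    π[A.indicator (fun _ => (1 : ℝ)) | m] =ᵐ[π] π[A'.indicator (fun _ => (1 : ℝ)) | m] :=
  condExp_congr_ae (indicator_ae_eq_of_ae_eq_set h)

/-- An event that agrees almost surely with an `m`-measurable one is conditionally independent of
every other event given `m`. -/
lemma condExp_inter_ae_eq_mul {Ω : Type*} {m mΩ : MeasurableSpace Ω} {π : Measure Ω}
    [IsProbabilityMeasure π] (hm : m ≤ mΩ) {A A' B : Set Ω} (hA' : MeasurableSet[m] A')
    (h : A =ᵐ[π] A') (hB : MeasurableSet B) :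
    π[(A ∩ B).indicator (fun _ => (1 : ℝ)) | m] =ᵐ[π]
      π[A.indicator (fun _ => (1 : ℝ)) | m] * π[B.indicator (fun _ => (1 : ℝ)) | m] := by
  have hA : π[A.indicator (fun _ => (1 : ℝ)) | m] =ᵐ[π] A'.indicator fun _ => 1 := by
    refine (condExp_congr_indicator h).trans ?_
    rw [condExp_of_stronglyMeasurable hm (stronglyMeasurable_const.indicator hA')
      ((integrable_const 1).indicator (hm _ hA'))]
  have hAB : (A' ∩ B).indicator (fun _ => (1 : ℝ)) =
      A'.indicator (B.indicator fun _ => (1 : ℝ)) := by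
    rw [indicator_indicator]
  refine (condExp_congr_indicator (h.inter (ae_eq_refl B))).trans ?_
  rw [hAB]
  refine (condExp_indicator ((integrable_const 1).indicator hB) hA').trans ?_
  filter_upwards [hA] with ω hω
  rw [Pi.mul_apply, hω]
  by_cases h : ω ∈ A' <;> simp [h]

/-- The joint law of `X` and an adapted functional of `X` is causal. -/
lemma isCausalStar_map_of_adapted [IsProbabilityMeasure μ] {Z : PathD N d → PathD N d}
    (hZ : ∀ i : Fin N, Measurable[Fn N d (i + 1)] fun x => Z x i) :
    IsCausalStar μ (μ.map fun x => (x, Z x)) := by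
  have hZm : Measurable Z := measurable_pi_lambda _ fun i => (hZ i).mono (Fn_le N d _) le_rfl
  have hm : Measurable fun x => (x, Z x) := measurable_id.prodMk hZm
  have := Measure.isProbabilityMeasure_map (μ := μ) hm.aemeasurable
  refine ⟨by rw [Measure.map_map measurable_fst hm]; exact Measure.map_id, fun n => ?_⟩
  rintro _ _ ⟨S, hS, rfl⟩ ⟨T, hT, rfl⟩
  have hle : (Fn N d n).comap Prod.fst ≤
      (inferInstance : MeasurableSpace (PathD N d × PathD N d)) := by
    rintro _ ⟨B, hB, rfl⟩
    exact measurable_fst (Fn_le N d n B hB)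
  have hZn : Measurable[Fn N d n, Fn N d n] Z :=
    measurable_to_Fn fun i hi => (hZ i).mono (Fn_mono hi) le_rfl
  refine condExp_inter_ae_eq_mul hle (A' := Prod.fst ⁻¹' (Z ⁻¹' S)) ⟨_, hZn hS, rfl⟩ ?_
    (measurable_fst (Fn_le N d N T hT))
  have hgraph : ∀ᵐ z ∂(μ.map fun x => (x, Z x)), z.2 = Z z.1 :=
    (ae_map_iff hm.aemeasurable (measurableSet_eq_fun measurable_snd (hZm.comp measurable_fst))).2
      (ae_of_all _ fun _ => rfl)
  filter_upwards [hgraph] with z hz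
  exact propext (by change z.2 ∈ S ↔ Z z.1 ∈ S; rw [hz])

/-- The adapted perturbation of `X` in the direction dual to the optional projection attains the
linear bound. -/
lemma exists_isCausalStar_integral_fderiv_eq (hpq : p.HolderConjugate q) [IsProbabilityMeasure μ]
    (hmom : Integrable (fun x : PathD N d => ‖x‖ ^ p) μ) (hf : ContDiff ℝ 1 f)
    (hgrow : ∀ n : ℕ, ∀ x : PathD N d, lpnorm q (Dn f n x) ≤ C * (1 + ‖x‖ ^ (p - 1)))
    {t : ℝ} (ht : 0 ≤ t) :
    ∃ π : Measure (PathD N d × PathD N d), IsProbabilityMeasure π ∧ IsCausalStar μ π ∧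
      Integrable (fun z => cN p z.1 z.2) π ∧ costD p π ≤ t ^ p ∧
      ∫ z, fderiv ℝ f z.1 (z.2 - z.1) ∂π = t * optionalNorm q μ f := by
  have hp := hpq.pos
  have hq := hpq.symm.pos
  have h1q : 1 ≤ ENNReal.ofReal q := ENNReal.one_le_ofReal.2 hpq.symm.lt.le
  have hW := memLp_optProj hpq hmom hf hgrow
  have hWi := fun a => integrable_abs_rpow hq (hW a)
  set S := ∑ a, ∫ x, |optProj μ f a x| ^ q ∂μ with hS
  have hS0 : 0 ≤ S := Finset.sum_nonneg fun a _ => integral_nonneg fun x => by positivity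
  set c := t * S ^ (-(1 / p)) with hc
  have hc0 : 0 ≤ c := by positivity
  set k : PathD N d → PathD N d := fun x i j =>
    c * (optProj μ f (i, j) x * |optProj μ f (i, j) x| ^ (q - 2)) with hk
  have hkabs : ∀ (a : Fin N × Fin d) x, |k x a.1 a.2| ^ p = c ^ p * |optProj μ f a x| ^ q := by
    intro a x
    have h1 : |optProj μ f a x * |optProj μ f a x| ^ (q - 2)| = |optProj μ f a x| ^ (q - 1) := by
      rcases eq_or_ne (optProj μ f a x) 0 with h | h
      · rw [h]
        simp [Real.zero_rpow hpq.symm.sub_one_ne_zero]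
      · have h' : 0 < |optProj μ f a x| := abs_pos.2 h
        rw [abs_mul, abs_of_nonneg (a := _ ^ (q - 2)) (by positivity)]
        nth_rewrite 1 [← Real.rpow_one |optProj μ f a x|]
        rw [← Real.rpow_add h']
        ring_nf
    rw [hk, abs_mul, h1, abs_of_nonneg hc0, Real.mul_rpow hc0 (by positivity),
      ← Real.rpow_mul (abs_nonneg _), hpq.symm.sub_one_mul_conj]
  have hkW : ∀ (a : Fin N × Fin d) x,
      optProj μ f a x * k x a.1 a.2 = c * |optProj μ f a x| ^ q := by
    intro a x
    have h1 : optProj μ f a x * (optProj μ f a x * |optProj μ f a x| ^ (q - 2)) =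
        |optProj μ f a x| ^ q := by
      rcases eq_or_ne (optProj μ f a x) 0 with h | h
      · rw [h]
        simp [Real.zero_rpow hq.ne']
      · have h' : 0 < |optProj μ f a x| := abs_pos.2 h
        rw [← mul_assoc, ← abs_mul_abs_self, ← pow_two, ← Real.rpow_natCast, ← Real.rpow_add h']
        norm_num
    rw [← h1, hk]
    ring
  have hkm : ∀ a : Fin N × Fin d, Measurable[Fn N d (a.1 + 1)] fun x => k x a.1 a.2 := by
    intro a
    have hφ : Measurable fun w : ℝ => c * (w * |w| ^ (q - 2)) := by fun_prop
    exact hφ.comp (measurable_optProj μ f a)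
  have hkm' : Measurable k := measurable_pi_lambda _ fun i => measurable_pi_lambda _ fun j =>
    (hkm (i, j)).mono (Fn_le N d _) le_rfl
  have hkLp : ∀ a : Fin N × Fin d, MemLp (fun x => k x a.1 a.2) (ENNReal.ofReal p) μ := by
    intro a
    have hkma := (hkm a).mono (Fn_le N d _) le_rfl
    refine (memLp_norm_iff hkma.aestronglyMeasurable).1 (memLp_ofReal_of_integrable_rpow hp
      hkma.norm.aestronglyMeasurable (fun _ => norm_nonneg _) ?_)
    simp only [Real.norm_eq_abs, hkabs]
    exact (hWi a).const_mul _
  set Z : PathD N d → PathD N d := fun x => x + DeltaInv (k x) with hZdef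
  have hZ : ∀ i : Fin N, Measurable[Fn N d (i + 1)] fun x => Z x i := by
    intro i
    have hD : Measurable[Fn N d (i + 1)] fun x => DeltaInv (k x) i := by
      simp only [DeltaInv]
      refine Finset.measurable_fun_sum _ fun l _ => ?_
      split_ifs with h
      · exact @measurable_pi_lambda _ _ _ (Fn N d (i + 1)) _ _ fun j =>
          (hkm (l, j)).mono (Fn_mono (by simpa using h)) le_rfl
      · exact measurable_const
    exact (measurable_eval_Fn le_rfl).add hD
  have hZm : Measurable Z := measurable_pi_lambda _ fun i => (hZ i).mono (Fn_le N d _) le_rfl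
  have hm : Measurable fun x => (x, Z x) := measurable_id.prodMk hZm
  have hZinc : ∀ x, inc (Z x - x) = k x := fun x => by
    rw [hZdef, add_sub_cancel_left, inc_DeltaInv]
  have hcost : ∀ x, cN p x (Z x) = ∑ a, c ^ p * |optProj μ f a x| ^ q := fun x => by
    rw [cN_eq_sum_inc hp.ne', hZinc]
    exact Finset.sum_congr rfl fun a _ => hkabs a x
  have hcNm : Measurable fun z : PathD N d × PathD N d => cN p z.1 z.2 := by
    simp only [cN_eq_sum_inc hp.ne']
    exact Finset.measurable_sum _ fun a _ => ((measurable_inc_sub a).abs.pow_const p)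
  refine ⟨μ.map fun x => (x, Z x), Measure.isProbabilityMeasure_map hm.aemeasurable,
    isCausalStar_map_of_adapted hZ, ?_, ?_, ?_⟩
  · rw [integrable_map_measure hcNm.aestronglyMeasurable hm.aemeasurable]
    simp only [Function.comp_def, hcost]
    exact integrable_finsetSum _ fun a _ => (hWi a).const_mul _
  · rw [costD, integral_map hm.aemeasurable hcNm.aestronglyMeasurable]
    simp only [hcost]
    rw [integral_finsetSum _ fun a _ => (hWi a).const_mul _]
    simp only [integral_const_mul]
    rw [← Finset.mul_sum, ← hS, hc, Real.mul_rpow ht (by positivity), ← Real.rpow_mul hS0,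
      neg_mul, one_div, inv_mul_cancel₀ hp.ne', mul_assoc]
    refine mul_le_of_le_one_right (by positivity) ?_
    rw [Real.rpow_neg_one]
    exact inv_mul_le_one
  · have hc1 : Continuous (fderiv ℝ f) := hf.continuous_fderiv one_ne_zero
    have hcont : Continuous fun z : PathD N d × PathD N d => fderiv ℝ f z.1 (z.2 - z.1) := by
      fun_prop
    rw [integral_map hm.aemeasurable hcont.aestronglyMeasurable]
    simp only [fderiv_apply_eq_sum, hZinc]
    have hD := fun n => memLp_Dn hpq hmom hf hgrow n
    have hDk : ∀ a : Fin N × Fin d,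
        Integrable (fun x => Dn f (a.1 + 1) x a.2 * k x a.1 a.2) μ := fun a =>
      integrable_mul_of_holderConjugate hpq.symm (memLp_eval (hD _) a.2) (hkLp a)
    rw [integral_finsetSum _ fun a _ => hDk a]
    have hterm : ∀ a : Fin N × Fin d, ∫ x, Dn f (a.1 + 1) x a.2 * k x a.1 a.2 ∂μ =
        c * ∫ x, |optProj μ f a x| ^ q ∂μ := by
      intro a
      rw [integral_mul_condExp (Fn_le N d _) ((memLp_eval (hD _) a.2).integrable h1q)
        (hkm a).stronglyMeasurable (hDk a), ← integral_const_mul]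
      refine integral_congr_ae ?_
      filter_upwards [optProj_ae_eq a ((hD _).integrable h1q)] with x hx
      rw [← hkW, hx]
    simp only [hterm]
    rw [← Finset.mul_sum, ← hS, optionalNorm_eq hq hW, ← hS, hc, mul_assoc]
    congr 1
    rcases hS0.eq_or_lt with h | h
    · rw [← h, mul_zero, Real.zero_rpow (one_div_pos.2 hq).ne']
    · nth_rewrite 2 [← Real.rpow_one S]
      rw [← Real.rpow_add h]
      congr 1
      have := hpq.inv_add_inv_eq_one
      rw [one_div, one_div]
      linarith

end LowerBound

section Sensitivity

lemma eventually_mul_rpow_lt {r : ℝ} (hr : 0 < r) (B : ℝ) {e : ℝ} (he : 0 < e) :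
    ∀ᶠ δ : ℝ in 𝓝[>] 0, B * δ ^ r < e := by
  have h : Tendsto (fun δ : ℝ => B * δ ^ r) (𝓝 0) (𝓝 (B * 0 ^ r)) :=
    ((Real.continuousAt_rpow_const 0 r (Or.inr hr.le)).tendsto).const_mul B
  rw [Real.zero_rpow hr.ne', mul_zero] at h
  exact (h.mono_left nhdsWithin_le_nhds).eventually_lt_const he

lemma PenaltyAssumptions.exists_le {p : ℝ} {L : ℝ → ℝ≥0∞} (hL : PenaltyAssumptions p L) (K : ℝ) :
    ∃ U : ℝ, 1 ≤ U ∧ ∀ u, U ≤ u → ENNReal.ofReal (K * u ^ p) ≤ L u := by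
  obtain ⟨U, hU⟩ := eventually_atTop.1
    (hL.growth.eventually_const_lt (ENNReal.ofReal_lt_top (r := K)))
  refine ⟨max U 1, le_max_right _ _, fun u hu => ?_⟩
  have hu0 : 0 < u := one_pos.trans_le ((le_max_right _ _).trans hu)
  have hup : 0 < ENNReal.ofReal (u ^ p) := ENNReal.ofReal_pos.2 (by positivity)
  rw [ENNReal.ofReal_mul' (by positivity)]
  exact ((ENNReal.lt_div_iff_mul_lt (Or.inl hup.ne') (Or.inl ENNReal.ofReal_ne_top)).1
    (hU u ((le_max_left _ _).trans hu))).le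

lemma coe_sub_coe_ennreal {x : ℝ} {l : ℝ≥0∞} (hl : l ≠ ⊤) :
    (x : EReal) - (l : EReal) = ((x - l.toReal : ℝ) : EReal) := by
  lift l to NNReal using hl
  rfl

lemma inv_mul_coe_mul {δ : ℝ} (hδ : 0 < δ) (b : ℝ) :
    ((1 / δ : ℝ) : EReal) * ((δ * b : ℝ) : EReal) = b := by
  rw [← EReal.coe_mul, ← mul_assoc, one_div, inv_mul_cancel₀ hδ.ne', one_mul]

/-- First-order expansion of a penalised supremum whose objective grows like `v ε` in the
radius `ε`. -/
lemma tendsto_penalized_iSup {ι : Type*} {p v : ℝ} (hp : 1 < p) (hv : 0 ≤ v) {L : ℝ → ℝ≥0∞}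
    (hL : PenaltyAssumptions p L) {F ε : ι → ℝ} {F₀ : ℝ} (hε : ∀ i, 0 ≤ ε i)
    (hupper : ∀ η > 0, ∃ M, 0 ≤ M ∧ ∀ i, F i - F₀ ≤ v * ε i + η * ε i + M * ε i ^ p)
    (hlower : ∀ η > 0, ∃ M, 0 ≤ M ∧
      ∀ t, 0 ≤ t → ∃ i, ε i ≤ t ∧ v * t - η * t - M * t ^ p ≤ F i - F₀) :
    Tendsto (fun δ : ℝ => ((1 / δ : ℝ) : EReal) *
        ((⨆ i, (F i : EReal) - ((ENNReal.ofReal δ * L (ε i / δ) : ℝ≥0∞) : EReal)) - (F₀ : EReal)))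
      (𝓝[>] 0) (𝓝 (Lconj L v)) := by
  have hp1 : 0 < p - 1 := sub_pos.2 hp
  have hscale : ∀ {δ u : ℝ}, 0 < δ → 0 ≤ u → (δ * u) ^ p = δ * (δ ^ (p - 1) * u ^ p) := by
    intro δ u hδ hu
    rw [Real.mul_rpow hδ.le hu, ← mul_assoc]
    nth_rewrite 2 [← Real.rpow_one δ]
    rw [← Real.rpow_add hδ, add_sub_cancel]
  refine tendsto_order.2 ⟨fun c hc => ?_, fun c hc => ?_⟩
  · obtain ⟨⟨u, hu⟩, hcu⟩ := lt_iSup_iff.1 hc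
    simp only at hcu
    have hLu : L u ≠ ⊤ := by
      intro h
      simp [h] at hcu
    rw [coe_sub_coe_ennreal hLu] at hcu
    obtain ⟨c', hcc', hc'⟩ := EReal.lt_iff_exists_real_btwn.1 hcu
    rw [EReal.coe_lt_coe_iff] at hc'
    set r := u * v - (L u).toReal with hr
    obtain ⟨M, hM, hi⟩ := hlower ((r - c') / (2 * (u + 1)))
      (div_pos (sub_pos.2 hc') (by positivity))
    filter_upwards [self_mem_nhdsWithin, eventually_mul_rpow_lt hp1 (M * u ^ p)
      (half_pos (sub_pos.2 hc'))] with δ hδ hδM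
    have hδ0 : 0 < δ := hδ
    obtain ⟨i, hεi, hFi⟩ := hi (δ * u) (by positivity)
    have hpen : ENNReal.ofReal δ * L (ε i / δ) ≤ ENNReal.ofReal δ * L u := by
      refine mul_le_mul_right (hL.mono (mem_Ici.2 (div_nonneg (hε i) hδ0.le))
        (mem_Ici.2 hu) ?_) _
      rwa [div_le_iff₀' hδ0]
    have hηu : (r - c') / (2 * (u + 1)) * u ≤ (r - c') / 2 := by
      rw [div_mul_eq_mul_div, div_le_div_iff₀ (by positivity) two_pos]
      nlinarith
    have hreal : δ * c' ≤ F i - δ * (L u).toReal - F₀ := by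
      rw [hscale hδ0 hu] at hFi
      have : δ * c' ≤ δ * (v * u - (r - c') / (2 * (u + 1)) * u - M * u ^ p * δ ^ (p - 1)
          - (L u).toReal) :=
        mul_le_mul_of_nonneg_left (by linarith) hδ0.le
      linarith
    refine hcc'.trans_le ?_
    rw [← inv_mul_coe_mul hδ0 c']
    refine mul_le_mul_of_nonneg_left ?_ (EReal.coe_nonneg.2 (by positivity))
    refine (EReal.coe_le_coe_iff.2 hreal).trans ?_
    rw [EReal.coe_sub]
    refine EReal.sub_le_sub (le_iSup_of_le i ?_) le_rfl
    have hpentop : ENNReal.ofReal δ * L u ≠ ⊤ := ENNReal.mul_ne_top ENNReal.ofReal_ne_top hLu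
    refine le_trans ?_ (EReal.sub_le_sub le_rfl (EReal.coe_ennreal_le_coe_ennreal_iff.2 hpen))
    rw [coe_sub_coe_ennreal hpentop, ENNReal.toReal_mul, ENNReal.toReal_ofReal hδ0.le]
  · obtain ⟨b, hb, hbc⟩ := EReal.lt_iff_exists_real_btwn.1 hc
    obtain ⟨b', hb', hb'b⟩ := EReal.lt_iff_exists_real_btwn.1 hb
    rw [EReal.coe_lt_coe_iff] at hb'b
    have hconj : ∀ u, 0 ≤ u → L u ≠ ⊤ → u * v - (L u).toReal ≤ b' := by
      intro u hu hLu
      have h := (le_iSup (fun u : {u : ℝ // 0 ≤ u} =>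
        ((u.1 * v : ℝ) : EReal) - ((L u.1 : ℝ≥0∞) : EReal)) ⟨u, hu⟩).trans hb'.le
      rw [coe_sub_coe_ennreal hLu] at h
      exact EReal.coe_le_coe_iff.1 h
    have hb'0 : 0 ≤ b' := by simpa [hL.zero] using hconj 0 le_rfl
    obtain ⟨M₁, hM₁, hF₁⟩ := hupper 1 one_pos
    obtain ⟨U, hU1, hU⟩ := hL.exists_le (v + 1 + M₁)
    obtain ⟨M, hM, hF⟩ := hupper ((b - b') / (2 * (U + 1)))
      (div_pos (sub_pos.2 hb'b) (by positivity))
    filter_upwards [self_mem_nhdsWithin, eventually_mul_rpow_lt hp1 (M * U ^ p)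
      (half_pos (sub_pos.2 hb'b)), eventually_mul_rpow_lt hp1 1 one_pos] with δ hδ hδM hδ1
    have hδ0 : 0 < δ := hδ
    rw [one_mul] at hδ1
    refine lt_of_le_of_lt ?_ hbc
    rw [← inv_mul_coe_mul hδ0 b]
    refine mul_le_mul_of_nonneg_left ?_ (EReal.coe_nonneg.2 (by positivity))
    have hsup : (⨆ i, (F i : EReal) - ((ENNReal.ofReal δ * L (ε i / δ) : ℝ≥0∞) : EReal)) ≤
        ((F₀ + δ * b : ℝ) : EReal) := by
      refine iSup_le fun i => ?_
      obtain ⟨u, hu, hεu⟩ : ∃ u, 0 ≤ u ∧ ε i = δ * u :=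
        ⟨ε i / δ, div_nonneg (hε i) hδ0.le, by field_simp⟩
      rw [hεu, mul_div_cancel_left₀ u hδ0.ne']
      have hFi := hF i
      have hF₁i := hF₁ i
      rw [hεu, hscale hδ0 hu] at hFi hF₁i
      by_cases hLu : L u = ⊤
      · rw [hLu, ENNReal.mul_top (ENNReal.ofReal_pos.2 hδ0).ne']
        simp
      rw [coe_sub_coe_ennreal (ENNReal.mul_ne_top ENNReal.ofReal_ne_top hLu), ENNReal.toReal_mul,
        ENNReal.toReal_ofReal hδ0.le, EReal.coe_le_coe_iff]
      rcases le_total u U with huU | hUu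
      · have hηu : (b - b') / (2 * (U + 1)) * u ≤ (b - b') / 2 := by
          rw [div_mul_eq_mul_div, div_le_div_iff₀ (by positivity) two_pos]
          nlinarith
        have hMu : M * (δ ^ (p - 1) * u ^ p) ≤ (b - b') / 2 := by
          refine le_trans ?_ hδM.le
          calc M * (δ ^ (p - 1) * u ^ p) ≤ M * (δ ^ (p - 1) * U ^ p) := by gcongr
            _ = M * U ^ p * δ ^ (p - 1) := by ring
        have := mul_le_mul_of_nonneg_left (show v * u + (b - b') / (2 * (U + 1)) * u +
          M * (δ ^ (p - 1) * u ^ p) ≤ b + (L u).toReal by linarith [hconj u hu hLu]) hδ0.le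
        linarith
      · have hu1 : 1 ≤ u := hU1.trans hUu
        have hup : u ≤ u ^ p := Real.self_le_rpow_of_one_le hu1 hp.le
        have hLge := (ENNReal.ofReal_le_iff_le_toReal hLu).1 (hU u hUu)
        have h2 : δ ^ (p - 1) * u ^ p ≤ u ^ p := mul_le_of_le_one_left (by positivity) hδ1.le
        have := mul_le_mul_of_nonneg_left (show v * u + 1 * u +
          M₁ * (δ ^ (p - 1) * u ^ p) ≤ b + (L u).toReal by nlinarith) hδ0.le
        linarith
    refine (EReal.sub_le_sub hsup le_rfl).trans_eq ?_
    rw [← EReal.coe_sub, add_sub_cancel_left]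

variable {N d : ℕ} {p q C : ℝ} {μ : Measure (PathD N d)} {f : PathD N d → ℝ}

lemma costD_nonneg (hp : p ≠ 0) (π : Measure (PathD N d × PathD N d)) : 0 ≤ costD p π :=
  integral_nonneg fun _ => cN_nonneg hp _ _

/-- First-order expansion of `E_π[f(Y)]` in the transport cost, uniformly over couplings. -/
lemma exists_expansion_costD (hpq : p.HolderConjugate q) [IsFiniteMeasure μ]
    (hmom : Integrable (fun x : PathD N d => ‖x‖ ^ p) μ) (hf : ContDiff ℝ 1 f)
    (hgrow : ∀ n : ℕ, ∀ x : PathD N d, lpnorm q (Dn f n x) ≤ C * (1 + ‖x‖ ^ (p - 1)))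
    {η : ℝ} (hη : 0 < η) :
    ∃ M, 0 ≤ M ∧ ∀ π : Measure (PathD N d × PathD N d), π.map Prod.fst = μ →
      Integrable (fun z => cN p z.1 z.2) π →
      |∫ z, f z.2 ∂π - ∫ x, f x ∂μ - ∫ z, fderiv ℝ f z.1 (z.2 - z.1) ∂π| ≤
        η * costD p π ^ (1 / p) + M * (costD p π ^ (1 / p)) ^ p := by
  have hp := hpq.pos
  obtain ⟨M, hM, h⟩ := exists_coupling_expansion hpq hmom hf
    (norm_fderiv_le_of_Dn hpq.symm.pos hgrow) (η := η / (N + 1)) (by positivity)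
  refine ⟨M * (N : ℝ) ^ p, by positivity, fun π hπ hint => ?_⟩
  have hcost := costD_nonneg hp.ne' π
  have hi : Integrable (fun z : PathD N d × PathD N d => ‖z.2 - z.1‖ ^ p) π := by
    refine (hint.const_mul ((N : ℝ) ^ p)).mono' ((by fun_prop : Measurable
      fun z : PathD N d × PathD N d => ‖z.2 - z.1‖ ^ p).aestronglyMeasurable)
      (ae_of_all _ fun z => ?_)
    rw [Real.norm_of_nonneg (by positivity)]
    exact norm_rpow_le_cN hp _ _
  have hle : ∫ z : PathD N d × PathD N d, ‖z.2 - z.1‖ ^ p ∂π ≤ (N : ℝ) ^ p * costD p π := by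
    rw [costD, ← integral_const_mul]
    exact integral_mono hi (hint.const_mul _) fun z => norm_rpow_le_cN hp _ _
  have hle' : (∫ z : PathD N d × PathD N d, ‖z.2 - z.1‖ ^ p ∂π) ^ (1 / p) ≤
      N * costD p π ^ (1 / p) := by
    refine (Real.rpow_le_rpow (integral_nonneg fun z => by positivity) hle
      (by positivity)).trans_eq ?_
    rw [Real.mul_rpow (by positivity) hcost, ← Real.rpow_mul (by positivity), one_div,
      mul_inv_cancel₀ hp.ne', Real.rpow_one]
  have hpow : (costD p π ^ (1 / p)) ^ p = costD p π := by
    rw [← Real.rpow_mul hcost, one_div, inv_mul_cancel₀ hp.ne', Real.rpow_one]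
  rw [hpow]
  refine (h π hπ hi).trans (add_le_add ?_ ?_)
  · calc η / (N + 1) * (∫ z : PathD N d × PathD N d, ‖z.2 - z.1‖ ^ p ∂π) ^ (1 / p)
        ≤ η / (N + 1) * ((N + 1) * costD p π ^ (1 / p)) := by
          gcongr
          refine hle'.trans ?_
          gcongr
          linarith
      _ = η * costD p π ^ (1 / p) := by field_simp
  · rw [mul_assoc]
    gcongr

end Sensitivity

end

/-- Discrete-time sensitivity of causal-Wasserstein DRO:
`lim_{δ→0+} (V(δ) − V(0))/δ = L*(‖ᵒ𝔻f‖_{L^q(μ)})`, where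
`‖ᵒ𝔻f‖_{L^q(μ)} = (Σ_{n=1}^N E_μ[|E_μ[𝔻_n f(X)|F_n]|_*^q])^{1/q}`. -/
theorem statement_8 {N d : ℕ} (p q : ℝ) (hp : 1 < p) (hq : q = p / (p - 1))
    (L : ℝ → ℝ≥0∞) (hL : PenaltyAssumptions p L)
    (μ : Measure (PathD N d)) [IsProbabilityMeasure μ]
    (hmom : Integrable (fun x : PathD N d => ‖x‖ ^ p) μ)
    (f : PathD N d → ℝ) (hf : ContDiff ℝ 1 f)
    (C : ℝ) (hgrow : ∀ n : ℕ, ∀ x : PathD N d,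
      lpnorm q (Dn f n x) ≤ C * (1 + ‖x‖ ^ (p - 1))) :
    Tendsto (fun δ : ℝ =>
        (((1 / δ : ℝ)) : EReal) * (VD p L μ f δ - ((∫ x, f x ∂μ : ℝ) : EReal)))
      (nhdsWithin 0 (Set.Ioi 0))
      (nhds (Lconj L (optionalNorm q μ f))) := by
  have hpq : p.HolderConjugate q := hq ▸ Real.HolderConjugate.conjExponent hp
  have hp0 := hpq.pos
  refine tendsto_penalized_iSup hp ?_ hL
    (ι := {π : Measure (PathD N d × PathD N d) //
      IsProbabilityMeasure π ∧ IsCausalStar μ π ∧ Integrable (fun z => cN p z.1 z.2) π})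
    (F := fun π => ∫ z, f z.2 ∂π.1) (ε := fun π => costD p π.1 ^ (1 / p))
    (fun π => Real.rpow_nonneg (costD_nonneg hp0.ne' _) _) (fun η hη => ?_) (fun η hη => ?_)
  · rw [optionalNorm_eq hpq.symm.pos (memLp_optProj hpq hmom hf hgrow)]
    exact Real.rpow_nonneg (Finset.sum_nonneg fun a _ => integral_nonneg fun x => by positivity) _
  · obtain ⟨M, hM, h⟩ := exists_expansion_costD hpq hmom hf hgrow hη
    refine ⟨M, hM, fun ⟨π, hprob, hπ, hint⟩ => ?_⟩
    have h1 := (abs_le.1 (h π hπ.1 hint)).2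
    have h2 := integral_fderiv_le_of_isCausalStar hpq hmom hf hgrow hπ hint
    simp only
    linarith
  · obtain ⟨M, hM, h⟩ := exists_expansion_costD hpq hmom hf hgrow hη
    refine ⟨M, hM, fun t ht => ?_⟩
    obtain ⟨π, hprob, hπ, hint, hcost, hfd⟩ :=
      exists_isCausalStar_integral_fderiv_eq hpq hmom hf hgrow ht
    have hc0 := costD_nonneg hp0.ne' π
    have hεt : costD p π ^ (1 / p) ≤ t := by
      rw [one_div]
      exact (Real.rpow_inv_le_iff_of_pos hc0 ht hp0).2 hcost
    have hε0 : 0 ≤ costD p π ^ (1 / p) := Real.rpow_nonneg hc0 _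
    refine ⟨⟨π, hprob, hπ, hint⟩, hεt, ?_⟩
    have h1 := (abs_le.1 (h π hπ.1 hint)).1
    have h2 := mul_le_mul_of_nonneg_left hεt hη.le
    have h3 := mul_le_mul_of_nonneg_left (Real.rpow_le_rpow hε0 hεt hp0.le) hM
    simp only
    linarith
end
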